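/- For every inverse temperature β ∈ (0,∞) and every range exponent α ∈ (2,3), there exist constants c_β > 0 and C_β < ∞ (depending only on β and α) such that for every integer N ≥ 1, the variance of the height at the origin under the discrete Gaussian long-range chain satisfies c_β N^{α−2} ≤ Var_{N,β,α}[φ(0)] ≤ C_β N^{α−2}. -/

import Mathlib

noncomputable section

/-- Configurations of the long-range chain of length `N`: integer-valued height functions
on `ℤ` vanishing outside `{-N, …, N}`. -/
def ChainConfig (N : ℕ) : Type :=
  {φ : ℤ → ℤ // ∀ k : ℤ, (N : ℤ) < |k| → φ k = 0}

/-- Energy `β ∑_{i ≠ j} |φ(i) − φ(j)|^q / |i − j|^α` of a configuration of the long-range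
chain with potential exponent `q` and range exponent `α`. -/
def chainEnergy (β α q : ℝ) (φ : ℤ → ℤ) : ℝ :=
  β * ∑' p : ℤ × ℤ,
      if p.1 = p.2 then 0
      else |((φ p.1 - φ p.2 : ℤ) : ℝ)| ^ q / |((p.1 - p.2 : ℤ) : ℝ)| ^ α

/-- Boltzmann weight of a configuration. -/
def chainWeight (β α q : ℝ) (φ : ℤ → ℤ) : ℝ :=
  Real.exp (-chainEnergy β α q φ)

/-- Partition function of the long-range chain. -/
def chainZ (N : ℕ) (β α q : ℝ) : ℝ :=
  ∑' φ : ChainConfig N, chainWeight β α q φ.val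

/-- Mean of the height at the origin. -/
def chainMean (N : ℕ) (β α q : ℝ) : ℝ :=
  (∑' φ : ChainConfig N, ((φ.val 0 : ℤ) : ℝ) * chainWeight β α q φ.val) / chainZ N β α q

/-- Variance of the height at the origin under the long-range chain `μ_{N,β,α}`
(with potential exponent `q`; `q = 2` is the discrete Gaussian chain,
`q ∈ (0,2)` the `q`-SOS chain). -/
def chainVar (N : ℕ) (β α q : ℝ) : ℝ :=
  (∑' φ : ChainConfig N, ((φ.val 0 : ℤ) : ℝ) ^ 2 * chainWeight β α q φ.val) / chainZ N β α q
    - chainMean N β α q ^ 2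

end

/-!
The energy is a quadratic form `Q` on the lattice of configurations. Passing from two independent
copies to their sum and difference and applying Cauchy–Schwarz over the cosets of `2Λ` yields
`Z(ℓ₁)² Z(ℓ₂)² ≤ Z(ℓ₁ + ℓ₂) Z(ℓ₁ - ℓ₂) Z(0)²` for `Z(ℓ) = ∑ exp (ℓ φ - Q φ)`. Iterating the
diagonal case `ℓ₁ = ℓ₂` shows that a functional with `ℓ² ≤ K Q` is sub-Gaussian, with variance at
most `2K`. Telescoping averages over dyadic blocks from the origin to the boundary gives the
Sobolev-type inequality `φ(0)² ≤ C N^(α-2) Q φ`, hence the upper bound.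

For the lower bound, shift the chain by `T n = ∑ nₛ 1_{[-aₛ, aₛ]}` with an auxiliary integer
Gaussian field `n` of energy `D n - Q (T n)`. Conditionally on `φ`, the shift has energy `D` and
some linear tilt, so the inequality above, applied to `D`, bounds the variance of `φ(0)` from below
by that of `∑ nₛ` under `exp (-D)`. If the radii `aₛ` are the multiples of `⌈N^(3-α)⌉` up to `N`,
about `N^(α-2)` in number, then counting the boxes which separate two sites gives
`Q (T n) ≤ C ∑ nₛ²` uniformly in `N`, so that `D` may be taken diagonal and the `nₛ` independent.
-/

section Sums

theorem hasSum_mul_of_nonneg {ι κ : Type*} {f : ι → ℝ} {g : κ → ℝ} {s t : ℝ} (hf : HasSum f s)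
    (hg : HasSum g t) (hf₀ : ∀ i, 0 ≤ f i) (hg₀ : ∀ k, 0 ≤ g k) :
    HasSum (fun p : ι × κ ↦ f p.1 * g p.2) (s * t) :=
  hf.mul hg (hf.summable.mul_of_nonneg hg.summable hf₀ hg₀)

theorem hasSum_prod_apply_fin {κ : Type*} {n : ℕ} {f : Fin n → κ → ℝ} {s : Fin n → ℝ}
    (hf₀ : ∀ i k, 0 ≤ f i k) (hf : ∀ i, HasSum (f i) (s i)) :
    HasSum (fun φ : Fin n → κ ↦ ∏ i, f i (φ i)) (∏ i, s i) := by
  induction n with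
  | zero => simp [hasSum_unique]
  | succ n ih =>
    have hmul := hasSum_mul_of_nonneg (hf 0) (ih (fun i ↦ hf₀ i.succ) fun i ↦ hf i.succ) (hf₀ 0)
      fun φ ↦ Finset.prod_nonneg fun i _ ↦ hf₀ i.succ (φ i)
    rw [Fin.prod_univ_succ, ← (Fin.consEquiv fun _ ↦ κ).hasSum_iff]
    simpa [Function.comp_def, Fin.consEquiv, Fin.prod_univ_succ] using hmul

theorem hasSum_prod_apply_pi {ι κ : Type*} [Fintype ι] {f : ι → κ → ℝ} {s : ι → ℝ}
    (hf₀ : ∀ i k, 0 ≤ f i k) (hf : ∀ i, HasSum (f i) (s i)) :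
    HasSum (fun φ : ι → κ ↦ ∏ i, f i (φ i)) (∏ i, s i) := by
  let e := Fintype.equivFin ι
  have h := hasSum_prod_apply_fin (fun i ↦ hf₀ (e.symm i)) fun i ↦ hf (e.symm i)
  rw [e.symm.prod_comp s, ← (e.arrowCongr (Equiv.refl κ)).hasSum_iff] at h
  convert h using 2 with φ
  simp [← e.symm.prod_comp fun i ↦ f i (φ i)]

theorem tsum_prod_mul {ι κ : Type*} {f : ι → ℝ} {g : κ → ℝ}
    (h : Summable fun p : ι × κ ↦ f p.1 * g p.2) :
    ∑' p : ι × κ, f p.1 * g p.2 = (∑' i, f i) * ∑' k, g k := by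
  simp only [h.tsum_prod, tsum_mul_left, tsum_mul_right]

theorem sq_le_mul_of_hasSum {ι : Type*} {f g : ι → ℝ} {a b c : ℝ}
    (hfg : HasSum (fun i ↦ f i * g i) a) (hf : HasSum (fun i ↦ f i ^ 2) b)
    (hg : HasSum (fun i ↦ g i ^ 2) c) : a ^ 2 ≤ b * c :=
  le_of_tendsto_of_tendsto' (Filter.Tendsto.pow hfg 2) (Filter.Tendsto.mul hf hg)
    fun s ↦ Finset.sum_mul_sq_le_sq_mul_sq s f g

end Sums

section Cosh

theorem one_add_sq_div_two_le_cosh (x : ℝ) : 1 + x ^ 2 / 2 ≤ Real.cosh x := by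
  have h : Real.cosh x = 1 + 2 * Real.sinh (x / 2) ^ 2 := by
    have h₁ := Real.cosh_two_mul (x / 2)
    have h₂ := Real.cosh_sq (x / 2)
    rw [mul_div_cancel₀ x two_ne_zero] at h₁
    linarith
  have habs : (x / 2) ^ 2 ≤ Real.sinh (x / 2) ^ 2 := by
    rw [sq_le_sq, Real.abs_sinh]
    exact Real.self_le_sinh_iff.2 (abs_nonneg _)
  linarith

theorem cosh_le_one_add_sq_mul_exp (x : ℝ) :
    Real.cosh x ≤ 1 + x ^ 2 / 2 * Real.exp (x ^ 2 / 2) := by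
  have hexp : Real.exp (x ^ 2 / 2) * (1 - x ^ 2 / 2) ≤ 1 := by
    calc Real.exp (x ^ 2 / 2) * (1 - x ^ 2 / 2)
        ≤ Real.exp (x ^ 2 / 2) * Real.exp (-(x ^ 2 / 2)) := by
          gcongr; exact Real.one_sub_le_exp_neg _
      _ = 1 := by rw [← Real.exp_add, add_neg_cancel, Real.exp_zero]
  linarith [Real.cosh_le_exp_half_sq x]

end Cosh

section LaplaceSum

variable {Λ : Type*} [AddCommGroup Λ]

/-- The weight `exp (ℓ φ - Q φ)` of a lattice point `φ` under the Gaussian with energy `Q`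
tilted by the linear functional `ℓ`. -/
noncomputable def tiltedWeight (Q : QuadraticMap ℤ Λ ℝ) (ℓ : Λ →ₗ[ℤ] ℝ) (φ : Λ) : ℝ :=
  Real.exp (ℓ φ - Q φ)

/-- The unnormalised Laplace transform `∑ exp (ℓ φ - Q φ)` of the discrete Gaussian on `Λ` with
energy `Q`; its value at `ℓ = 0` is the partition function. -/
noncomputable def laplaceSum (Q : QuadraticMap ℤ Λ ℝ) (ℓ : Λ →ₗ[ℤ] ℝ) : ℝ :=
  ∑' φ, tiltedWeight Q ℓ φ

variable {Q : QuadraticMap ℤ Λ ℝ} {ℓ ℓ₁ ℓ₂ : Λ →ₗ[ℤ] ℝ}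

theorem tiltedWeight_pos (Q : QuadraticMap ℤ Λ ℝ) (ℓ : Λ →ₗ[ℤ] ℝ) (φ : Λ) :
    0 < tiltedWeight Q ℓ φ :=
  Real.exp_pos _

theorem tiltedWeight_zero (Q : QuadraticMap ℤ Λ ℝ) (φ : Λ) :
    tiltedWeight Q 0 φ = Real.exp (-Q φ) := by
  simp [tiltedWeight]

theorem tiltedWeight_neg (Q : QuadraticMap ℤ Λ ℝ) (ℓ : Λ →ₗ[ℤ] ℝ) (φ : Λ) :
    tiltedWeight Q (-ℓ) φ = tiltedWeight Q ℓ (-φ) := by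
  simp [tiltedWeight]

theorem summable_tiltedWeight_neg (h : Summable (tiltedWeight Q ℓ)) :
    Summable (tiltedWeight Q (-ℓ)) := by
  simpa only [Function.comp_def, Equiv.neg_apply, ← tiltedWeight_neg] using
    (Equiv.neg Λ).summable_iff.2 h

theorem laplaceSum_neg (Q : QuadraticMap ℤ Λ ℝ) (ℓ : Λ →ₗ[ℤ] ℝ) :
    laplaceSum Q (-ℓ) = laplaceSum Q ℓ := by
  simpa only [laplaceSum, tiltedWeight_neg, Equiv.neg_apply] using
    (Equiv.neg Λ).tsum_eq (tiltedWeight Q ℓ)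

theorem laplaceSum_pos (h : Summable (tiltedWeight Q ℓ)) : 0 < laplaceSum Q ℓ :=
  h.tsum_pos (fun φ ↦ (tiltedWeight_pos Q ℓ φ).le) 0 (tiltedWeight_pos Q ℓ 0)

theorem laplaceSum_nonneg (Q : QuadraticMap ℤ Λ ℝ) (ℓ : Λ →ₗ[ℤ] ℝ) : 0 ≤ laplaceSum Q ℓ :=
  tsum_nonneg fun φ ↦ (tiltedWeight_pos Q ℓ φ).le

theorem tiltedWeight_add_add_tiltedWeight_sub (Q : QuadraticMap ℤ Λ ℝ) (ℓ₁ ℓ₂ : Λ →ₗ[ℤ] ℝ)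
    (φ : Λ) : tiltedWeight Q (ℓ₁ + ℓ₂) φ + tiltedWeight Q (ℓ₁ - ℓ₂) φ =
      2 * Real.cosh (ℓ₂ φ) * tiltedWeight Q ℓ₁ φ := by
  have h (t : ℝ) : ℓ₁ φ + t - Q φ = t + (ℓ₁ φ - Q φ) := by ring
  simp only [tiltedWeight, LinearMap.add_apply, LinearMap.sub_apply, sub_eq_add_neg (ℓ₁ φ) (ℓ₂ φ),
    h, Real.exp_add, Real.cosh_eq]
  ring

theorem summable_tiltedWeight_midpoint (hadd : Summable (tiltedWeight Q (ℓ₁ + ℓ₂)))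
    (hsub : Summable (tiltedWeight Q (ℓ₁ - ℓ₂))) : Summable (tiltedWeight Q ℓ₁) := by
  refine (hadd.add hsub).of_nonneg_of_le (fun φ ↦ (tiltedWeight_pos Q ℓ₁ φ).le) fun φ ↦ ?_
  rw [tiltedWeight_add_add_tiltedWeight_sub]
  exact le_mul_of_one_le_left (tiltedWeight_pos Q ℓ₁ φ).le (by linarith [Real.one_le_cosh (ℓ₂ φ)])

theorem summable_tiltedWeight_zero (h : Summable (tiltedWeight Q ℓ)) :
    Summable (tiltedWeight Q 0) :=
  summable_tiltedWeight_midpoint (ℓ₂ := ℓ) (by simpa using h)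
    (by simpa using summable_tiltedWeight_neg h)

theorem hasSum_cosh_mul_exp_neg (h : Summable (tiltedWeight Q ℓ)) :
    HasSum (fun φ ↦ Real.cosh (ℓ φ) * Real.exp (-Q φ)) (laplaceSum Q ℓ) := by
  have hsum := (h.hasSum.add (summable_tiltedWeight_neg h).hasSum).div_const 2
  rw [← laplaceSum, ← laplaceSum, laplaceSum_neg, add_self_div_two] at hsum
  refine hsum.congr_fun fun φ ↦ ?_
  have hcosh := tiltedWeight_add_add_tiltedWeight_sub Q 0 ℓ φ
  rw [zero_add, zero_sub, tiltedWeight_zero] at hcosh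
  linarith

end LaplaceSum

section ThetaInequality

variable {Λ : Type*} [AddCommGroup Λ]

theorem map_add_add_map_sub (Q : QuadraticMap ℤ Λ ℝ) (φ ψ : Λ) :
    Q (φ + ψ) + Q (φ - ψ) = 2 * Q φ + 2 * Q ψ := by
  rw [sub_eq_add_neg, QuadraticMap.map_add Q, QuadraticMap.map_add Q, QuadraticMap.map_neg,
    QuadraticMap.polar_neg_right]
  ring

/-- The sublattice `2Λ`. -/
abbrev doubles (Λ : Type*) [AddCommGroup Λ] : AddSubgroup Λ :=
  (nsmulAddMonoidHom (α := Λ) 2).range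

theorem bijective_add_add_out_sub [IsAddTorsionFree Λ] :
    Function.Bijective fun p : (Λ ⧸ doubles Λ) × Λ × Λ ↦
      (p.2.1 + p.2.2 + p.1.out, p.2.1 - p.2.2) := by
  constructor
  · rintro ⟨q, w₁, w₂⟩ ⟨q', w₁', w₂'⟩ h
    obtain ⟨hadd, hsub⟩ := Prod.ext_iff.1 h
    simp only at hadd hsub
    have htwice : 2 • w₁ + q.out = 2 • w₁' + q'.out :=
      calc 2 • w₁ + q.out = w₁ + w₂ + q.out + (w₁ - w₂) := by abel
        _ = w₁' + w₂' + q'.out + (w₁' - w₂') := by rw [hadd, hsub]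
        _ = 2 • w₁' + q'.out := by abel
    obtain rfl : q = q' := by
      rw [← q.out_eq', ← q'.out_eq', QuotientAddGroup.eq]
      refine ⟨w₁ - w₁', ?_⟩
      rw [eq_sub_of_add_eq' htwice.symm, nsmulAddMonoidHom_apply]
      abel
    obtain rfl := nsmul_right_injective two_ne_zero (add_right_cancel htwice)
    simpa using hsub
  · rintro ⟨φ, ψ⟩
    obtain ⟨q, hq⟩ : ∃ q : Λ ⧸ doubles Λ, q = QuotientAddGroup.mk (φ - ψ) := ⟨_, rfl⟩
    rw [← q.out_eq', QuotientAddGroup.eq] at hq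
    obtain ⟨w, hw⟩ := hq
    rw [nsmulAddMonoidHom_apply, eq_neg_add_iff_add_eq, eq_sub_iff_add_eq] at hw
    have hφ : ψ + w + w + q.out = φ := by rw [← hw]; abel
    exact ⟨(q, ψ + w, w), Prod.ext hφ (add_sub_cancel_right ψ w)⟩

/-- The sum of the square roots of the tilted weights over the coset `q` of `2Λ`. -/
noncomputable def cosetSum (Q : QuadraticMap ℤ Λ ℝ) (q : Λ ⧸ doubles Λ) (ℓ : Λ →ₗ[ℤ] ℝ) : ℝ :=
  ∑' w, √(tiltedWeight Q ℓ (2 • w + q.out))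

theorem tiltedWeight_mul_tiltedWeight (Q : QuadraticMap ℤ Λ ℝ) (ℓ₁ ℓ₂ : Λ →ₗ[ℤ] ℝ)
    (w₁ w₂ s : Λ) :
    tiltedWeight Q ℓ₁ (w₁ + w₂ + s) * tiltedWeight Q ℓ₂ (w₁ - w₂) =
      √(tiltedWeight Q (ℓ₁ + ℓ₂) (2 • w₁ + s)) * √(tiltedWeight Q (ℓ₁ - ℓ₂) (2 • w₂ + s)) := by
  have hQ := map_add_add_map_sub Q (w₁ + w₂ + s) (w₁ - w₂)
  rw [show w₁ + w₂ + s + (w₁ - w₂) = 2 • w₁ + s by abel,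
    show w₁ + w₂ + s - (w₁ - w₂) = 2 • w₂ + s by abel] at hQ
  simp only [tiltedWeight, ← Real.exp_half, ← Real.exp_add, map_add, map_sub, map_nsmul,
    LinearMap.add_apply, LinearMap.sub_apply, nsmul_eq_mul]
  congr 1
  push_cast
  linarith

variable [IsAddTorsionFree Λ] {Q : QuadraticMap ℤ Λ ℝ} {ℓ₁ ℓ₂ : Λ →ₗ[ℤ] ℝ}

theorem hasSum_cosetSum_mul (h₁ : Summable (tiltedWeight Q ℓ₁))
    (h₂ : Summable (tiltedWeight Q ℓ₂)) :
    HasSum (fun q ↦ cosetSum Q q (ℓ₁ + ℓ₂) * cosetSum Q q (ℓ₁ - ℓ₂))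
      (laplaceSum Q ℓ₁ * laplaceSum Q ℓ₂) := by
  have hmul := hasSum_mul_of_nonneg h₁.hasSum h₂.hasSum (fun φ ↦ (tiltedWeight_pos Q ℓ₁ φ).le)
    fun φ ↦ (tiltedWeight_pos Q ℓ₂ φ).le
  rw [← (Equiv.ofBijective _ bijective_add_add_out_sub).hasSum_iff] at hmul
  simp only [Function.comp_def, Equiv.ofBijective_apply, tiltedWeight_mul_tiltedWeight] at hmul
  refine hmul.prod_fiberwise fun q ↦ ?_
  have hfiber := hmul.summable.prod_factor q
  rw [cosetSum, cosetSum, ← tsum_prod_mul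
    (f := fun w ↦ √(tiltedWeight Q (ℓ₁ + ℓ₂) (2 • w + q.out)))
    (g := fun w ↦ √(tiltedWeight Q (ℓ₁ - ℓ₂) (2 • w + q.out))) hfiber]
  exact hfiber.hasSum

/-- Rotating two independent copies of the Gaussian by `45°` factors the product of two Laplace
transforms over the cosets of `2Λ`; the Cauchy–Schwarz inequality over the cosets does the rest. -/
theorem laplaceSum_mul_sq_le (hadd : Summable (tiltedWeight Q (ℓ₁ + ℓ₂)))
    (hsub : Summable (tiltedWeight Q (ℓ₁ - ℓ₂))) :
    (laplaceSum Q ℓ₁ * laplaceSum Q ℓ₂) ^ 2 ≤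
      laplaceSum Q (ℓ₁ + ℓ₂) * laplaceSum Q 0 * (laplaceSum Q (ℓ₁ - ℓ₂) * laplaceSum Q 0) := by
  have h₁ : Summable (tiltedWeight Q ℓ₁) := summable_tiltedWeight_midpoint hadd hsub
  have h₂ : Summable (tiltedWeight Q ℓ₂) :=
    summable_tiltedWeight_midpoint (ℓ₂ := ℓ₁) (by rwa [add_comm])
      (by simpa using summable_tiltedWeight_neg hsub)
  have h₀ := summable_tiltedWeight_zero h₁
  refine sq_le_mul_of_hasSum (hasSum_cosetSum_mul h₁ h₂) ?_ ?_
  · simpa only [add_zero, sub_zero, ← sq] using hasSum_cosetSum_mul hadd h₀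
  · simpa only [add_zero, sub_zero, ← sq] using hasSum_cosetSum_mul hsub h₀

end ThetaInequality

section SubGaussian

/-- The Gaussian sums of the energy `Q` converge at every positive inverse temperature. -/
def IsConfining {Λ : Type*} [AddCommGroup Λ] (Q : QuadraticMap ℤ Λ ℝ) : Prop :=
  ∀ δ : ℝ, 0 < δ → Summable fun φ ↦ Real.exp (-(δ * Q φ))

/-- The unnormalised second moment `∑ ℓ(φ)² exp (-Q φ)` of `ℓ` under the discrete Gaussian. -/
noncomputable def secondMoment {Λ : Type*} [AddCommGroup Λ] (Q : QuadraticMap ℤ Λ ℝ)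
    (ℓ : Λ →ₗ[ℤ] ℝ) : ℝ :=
  ∑' φ, ℓ φ ^ 2 * Real.exp (-Q φ)

theorem le_one_of_pow_four_le {X : Type*} {g : X → ℝ} (T : X → X) (hbdd : BddAbove (Set.range g))
    (hg : ∀ x, g x ^ 4 ≤ g (T x)) (x : X) : g x ≤ 1 := by
  by_contra! hx
  have hsup : 1 < ⨆ x, g x := hx.trans_le (le_ciSup hbdd x)
  have : Nonempty X := ⟨x⟩
  have hsqrt : √(⨆ x, g x) < ⨆ x, g x := (Real.sqrt_lt' (by linarith)).2 (by nlinarith)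
  obtain ⟨y, hy⟩ := exists_lt_of_lt_ciSup hsqrt
  have hy₁ : 1 < g y := ((Real.lt_sqrt zero_le_one).2 (by simpa using hsup)).trans hy
  have hsq : ⨆ x, g x < g y ^ 2 := (Real.sqrt_lt' (by linarith)).1 hy
  exact (hsq.trans_le (pow_le_pow_right₀ hy₁.le (by norm_num))).not_ge
    ((hg y).trans (le_ciSup hbdd (T y)))

theorem mul_le_half_add_of_sq_le {a q K : ℝ} (hK : 0 < K) (h : a ^ 2 ≤ K * q) (t : ℝ) :
    t * a ≤ q / 2 + K * t ^ 2 / 2 := by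
  have hsq : K * (t * a) ≤ K * (q / 2 + K * t ^ 2 / 2) := by nlinarith [sq_nonneg (a - K * t)]
  exact le_of_mul_le_mul_left hsq hK

variable {Λ : Type*} [AddCommGroup Λ] {Q : QuadraticMap ℤ Λ ℝ} {ℓ : Λ →ₗ[ℤ] ℝ} {K : ℝ}

theorem IsConfining.laplaceSum_zero_pos (hQ : IsConfining Q) : 0 < laplaceSum Q 0 :=
  laplaceSum_pos ((hQ 1 one_pos).congr fun φ ↦ by rw [tiltedWeight_zero, one_mul])

theorem secondMoment_smul (Q : QuadraticMap ℤ Λ ℝ) (ℓ : Λ →ₗ[ℤ] ℝ) (t : ℝ) :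
    secondMoment Q (t • ℓ) = t ^ 2 * secondMoment Q ℓ := by
  simp only [secondMoment, LinearMap.smul_apply, smul_eq_mul, mul_pow, mul_assoc, tsum_mul_left]

theorem summable_sq_mul_exp_neg (h : Summable (tiltedWeight Q ℓ)) :
    Summable fun φ ↦ ℓ φ ^ 2 * Real.exp (-Q φ) := by
  refine ((hasSum_cosh_mul_exp_neg h).summable.mul_left 2).of_nonneg_of_le
    (fun φ ↦ by positivity) fun φ ↦ ?_
  rw [← mul_assoc]
  gcongr
  linarith [one_add_sq_div_two_le_cosh (ℓ φ)]

theorem laplaceSum_zero_add_half_secondMoment_le (h : Summable (tiltedWeight Q ℓ)) :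
    laplaceSum Q 0 + secondMoment Q ℓ / 2 ≤ laplaceSum Q ℓ := by
  refine hasSum_le (fun φ ↦ ?_) ((summable_tiltedWeight_zero h).hasSum.add
    ((summable_sq_mul_exp_neg h).hasSum.div_const 2)) (hasSum_cosh_mul_exp_neg h)
  rw [tiltedWeight_zero]
  have hcosh := mul_le_mul_of_nonneg_right (one_add_sq_div_two_le_cosh (ℓ φ))
    (Real.exp_pos (-Q φ)).le
  linarith

theorem tiltedWeight_smul_le (hK : 0 < K) (hℓ : ∀ φ, ℓ φ ^ 2 ≤ K * Q φ) (t : ℝ) (φ : Λ) :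
    tiltedWeight Q (t • ℓ) φ ≤ Real.exp (K * t ^ 2 / 2) * Real.exp (-(1 / 2 * Q φ)) := by
  rw [tiltedWeight, ← Real.exp_add, LinearMap.smul_apply, smul_eq_mul]
  gcongr
  linarith [mul_le_half_add_of_sq_le hK (hℓ φ) t]

theorem IsConfining.summable_tiltedWeight_smul (hQ : IsConfining Q) (hK : 0 < K)
    (hℓ : ∀ φ, ℓ φ ^ 2 ≤ K * Q φ) (t : ℝ) : Summable (tiltedWeight Q (t • ℓ)) :=
  ((hQ (1 / 2) one_half_pos).mul_left _).of_nonneg_of_le (fun φ ↦ (tiltedWeight_pos _ _ φ).le)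
    (tiltedWeight_smul_le hK hℓ t)

theorem laplaceSum_pow_four_le [IsAddTorsionFree Λ] (h : Summable (tiltedWeight Q (ℓ + ℓ))) :
    laplaceSum Q ℓ ^ 4 ≤ laplaceSum Q (ℓ + ℓ) * laplaceSum Q 0 ^ 3 := by
  have htheta := laplaceSum_mul_sq_le h (by simpa using summable_tiltedWeight_zero h)
  rw [sub_self] at htheta
  linarith

theorem laplaceSum_smul_le_exp_mul [IsAddTorsionFree Λ] (hQ : IsConfining Q) (hK : 0 < K)
    (hℓ : ∀ φ, ℓ φ ^ 2 ≤ K * Q φ) (t : ℝ) :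
    laplaceSum Q (t • ℓ) ≤ Real.exp (K * t ^ 2 / 2) * laplaceSum Q 0 := by
  have hsum := hQ.summable_tiltedWeight_smul hK hℓ
  have hZ := hQ.laplaceSum_zero_pos
  set g : ℝ → ℝ := fun t ↦ laplaceSum Q (t • ℓ) / (Real.exp (K * t ^ 2 / 2) * laplaceSum Q 0)
  suffices hg : g t ≤ 1 from (div_le_one (by positivity)).1 hg
  refine le_one_of_pow_four_le (fun t ↦ t + t)
    ⟨(∑' φ, Real.exp (-(1 / 2 * Q φ))) / laplaceSum Q 0, ?_⟩ (fun s ↦ ?_) t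
  · rintro _ ⟨s, rfl⟩
    rw [← mul_div_mul_left _ (laplaceSum Q 0) (Real.exp_ne_zero (K * s ^ 2 / 2)), ← tsum_mul_left]
    simp only [g, laplaceSum]
    gcongr
    · exact hsum s
    · exact (hQ (1 / 2) one_half_pos).mul_left _
    · exact tiltedWeight_smul_le hK hℓ s _
  · have hfour := laplaceSum_pow_four_le (ℓ := s • ℓ) (by simpa only [add_smul] using hsum (s + s))
    have hexp : Real.exp (K * (s + s) ^ 2 / 2) = Real.exp (K * s ^ 2 / 2) ^ 4 := by
      rw [← Real.exp_nat_mul]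
      congr 1
      push_cast
      ring
    simp only [g]
    rw [div_pow, mul_pow, hexp, add_smul, div_le_div_iff₀ (by positivity) (by positivity)]
    calc _ ≤ laplaceSum Q (s • ℓ + s • ℓ) * laplaceSum Q 0 ^ 3 *
          (Real.exp (K * s ^ 2 / 2) ^ 4 * laplaceSum Q 0) := by gcongr
      _ = _ := by ring

/-- Evaluate the sub-Gaussian bound on the Laplace transform at `t² = 2 / K`. -/
theorem secondMoment_le_of_sq_le [IsAddTorsionFree Λ] (hQ : IsConfining Q) (hK : 0 < K)
    (hℓ : ∀ φ, ℓ φ ^ 2 ≤ K * Q φ) : secondMoment Q ℓ ≤ 2 * K * laplaceSum Q 0 := by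
  have hsum := hQ.summable_tiltedWeight_smul hK hℓ
  have hZ := hQ.laplaceSum_zero_pos
  have ht : √(2 / K) ^ 2 = 2 / K := Real.sq_sqrt (by positivity)
  have hlower := laplaceSum_zero_add_half_secondMoment_le (hsum √(2 / K))
  have hupper := laplaceSum_smul_le_exp_mul hQ hK hℓ √(2 / K)
  rw [secondMoment_smul, ht] at hlower
  rw [ht, mul_div_cancel₀ _ hK.ne', div_self two_ne_zero] at hupper
  have he : Real.exp 1 * laplaceSum Q 0 ≤ 3 * laplaceSum Q 0 := by
    gcongr; exact Real.exp_one_lt_three.le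
  have hdiv : secondMoment Q ℓ / K ≤ 2 * laplaceSum Q 0 := by
    have : 2 / K * secondMoment Q ℓ / 2 = secondMoment Q ℓ / K := by ring
    linarith
  rw [div_le_iff₀ hK] at hdiv
  linarith

theorem sq_mul_exp_neg_half_le {a q K : ℝ} (hK : 0 < K) (h : a ^ 2 ≤ K * q) :
    a ^ 2 * Real.exp (-(q / 2)) ≤ 4 * K * Real.exp (-(1 / 4 * q)) := by
  have hq : q ≤ 4 * Real.exp (q / 4) := by linarith [Real.add_one_le_exp (q / 4)]
  calc a ^ 2 * Real.exp (-(q / 2)) ≤ K * (4 * Real.exp (q / 4)) * Real.exp (-(q / 2)) := by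
        gcongr; exact h.trans (by gcongr)
    _ = 4 * K * (Real.exp (q / 4) * Real.exp (-(q / 2))) := by ring
    _ = 4 * K * Real.exp (-(1 / 4 * q)) := by rw [← Real.exp_add]; ring_nf

theorem sq_mul_exp_sub_le {a q K t : ℝ} (hK : 0 < K) (h : a ^ 2 ≤ K * q)
    (ht : t ^ 2 ≤ 1 / K) :
    a ^ 2 * Real.exp ((t * a) ^ 2 / 2 - q) ≤ 4 * K * Real.exp (-(1 / 4 * q)) := by
  have htq : (t * a) ^ 2 ≤ q :=
    calc (t * a) ^ 2 = t ^ 2 * a ^ 2 := mul_pow t a 2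
      _ ≤ 1 / K * (K * q) := by gcongr
      _ = q := by field_simp
  refine le_trans ?_ (sq_mul_exp_neg_half_le hK h)
  gcongr
  linarith

theorem laplaceSum_smul_le_add {t : ℝ} (h : Summable (tiltedWeight Q (t • ℓ)))
    (hexp : Summable fun φ ↦ ℓ φ ^ 2 * Real.exp ((t * ℓ φ) ^ 2 / 2 - Q φ)) :
    laplaceSum Q (t • ℓ) ≤
      laplaceSum Q 0 + t ^ 2 / 2 * ∑' φ, ℓ φ ^ 2 * Real.exp ((t * ℓ φ) ^ 2 / 2 - Q φ) := by
  refine hasSum_le (fun φ ↦ ?_) (hasSum_cosh_mul_exp_neg h)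
    ((summable_tiltedWeight_zero h).hasSum.add (hexp.hasSum.mul_left (t ^ 2 / 2)))
  rw [tiltedWeight_zero, LinearMap.smul_apply, smul_eq_mul, sub_eq_add_neg _ (Q φ), Real.exp_add]
  have hcosh := mul_le_mul_of_nonneg_right (cosh_le_one_add_sq_mul_exp (t * ℓ φ))
    (Real.exp_pos (-Q φ)).le
  refine hcosh.trans_eq ?_
  ring

theorem mul_laplaceSum_le_secondMoment (hQ : IsConfining Q) (hK : 0 < K)
    (hℓ : ∀ φ, ℓ φ ^ 2 ≤ K * Q φ) {a : ℝ}
    (ha : ∀ t : ℝ, (1 + a * t ^ 2 / 2) * laplaceSum Q 0 ≤ laplaceSum Q (t • ℓ)) :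
    a * laplaceSum Q 0 ≤ secondMoment Q ℓ := by
  have hbound := (hQ (1 / 4) (by norm_num)).mul_left (4 * K)
  have hsmall : ∀ᶠ t : ℝ in nhdsWithin 0 (Set.Ioi 0), 0 < t ∧ t ^ 2 ≤ 1 / K := by
    have hlim : Filter.Tendsto (fun t : ℝ ↦ t ^ 2) (nhds 0) (nhds 0) := by
      simpa using (continuous_pow 2).tendsto (0 : ℝ)
    filter_upwards [self_mem_nhdsWithin,
      nhdsWithin_le_nhds (hlim.eventually_le_const (one_div_pos.2 hK))] with t ht₀ ht
    exact ⟨ht₀, ht⟩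
  have hlim : Filter.Tendsto (fun t : ℝ ↦ ∑' φ, ℓ φ ^ 2 * Real.exp ((t * ℓ φ) ^ 2 / 2 - Q φ))
      (nhdsWithin 0 (Set.Ioi 0)) (nhds (secondMoment Q ℓ)) := by
    refine tendsto_tsum_of_dominated_convergence hbound (fun φ ↦ ?_) ?_
    · have hcont : Continuous fun t : ℝ ↦ ℓ φ ^ 2 * Real.exp ((t * ℓ φ) ^ 2 / 2 - Q φ) := by
        fun_prop
      simpa using (hcont.tendsto 0).mono_left nhdsWithin_le_nhds
    · filter_upwards [hsmall] with t ht φ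
      rw [Real.norm_of_nonneg (by positivity)]
      exact sq_mul_exp_sub_le hK (hℓ φ) ht.2
  refine ge_of_tendsto hlim ?_
  filter_upwards [hsmall] with t ⟨ht₀, ht⟩
  have hexp := hbound.of_nonneg_of_le (fun φ ↦ by positivity)
    fun φ ↦ sq_mul_exp_sub_le hK (hℓ φ) ht
  have hle := (ha t).trans (laplaceSum_smul_le_add (hQ.summable_tiltedWeight_smul hK hℓ t) hexp)
  refine le_of_mul_le_mul_left (a := t ^ 2 / 2) ?_ (by positivity)
  linarith

end SubGaussian

section Comparison

variable {Λ Γ : Type*} [AddCommGroup Λ] [AddCommGroup Γ] {Q : QuadraticMap ℤ Λ ℝ}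
  {D : QuadraticMap ℤ Γ ℝ} {T : Γ →ₗ[ℤ] Λ} {ℓ : Λ →ₗ[ℤ] ℝ}

/-- The contribution of `φ` to the tilted sum of the joint energy `Q (φ + T n) + (D n - Q (T n))`
on `Λ × Γ`: the map `T` shifts configurations by an auxiliary Gaussian field `n` on `Γ`. -/
noncomputable def fiberSum (Q : QuadraticMap ℤ Λ ℝ) (D : QuadraticMap ℤ Γ ℝ) (T : Γ →ₗ[ℤ] Λ)
    (ℓ : Λ →ₗ[ℤ] ℝ) (φ : Λ) : ℝ :=
  tiltedWeight Q ℓ φ * laplaceSum D ((ℓ - Q.polarBilin φ) ∘ₗ T)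

theorem exp_mul_tiltedWeight_add (Q : QuadraticMap ℤ Λ ℝ) (D : QuadraticMap ℤ Γ ℝ)
    (T : Γ →ₗ[ℤ] Λ) (ℓ : Λ →ₗ[ℤ] ℝ) (φ : Λ) (n : Γ) :
    Real.exp (-(D n - Q (T n))) * tiltedWeight Q ℓ (φ + T n) =
      tiltedWeight Q ℓ φ * tiltedWeight D ((ℓ - Q.polarBilin φ) ∘ₗ T) n := by
  simp only [tiltedWeight, ← Real.exp_add, LinearMap.comp_apply, LinearMap.sub_apply,
    QuadraticMap.polarBilin_apply_apply, map_add, QuadraticMap.map_add Q]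
  ring_nf

theorem hasSum_joint (hR : Summable fun n ↦ Real.exp (-(D n - Q (T n))))
    (h : Summable (tiltedWeight Q ℓ)) :
    HasSum (fun p : Λ × Γ ↦
        tiltedWeight Q ℓ p.1 * tiltedWeight D ((ℓ - Q.polarBilin p.1) ∘ₗ T) p.2)
      ((∑' n, Real.exp (-(D n - Q (T n)))) * laplaceSum Q ℓ) := by
  let shear : Λ × Γ ≃ Γ × Λ :=
    (Equiv.prodComm Λ Γ).trans (Equiv.prodShear (Equiv.refl Γ) fun n ↦ Equiv.addRight (T n))
  have hmul := hasSum_mul_of_nonneg hR.hasSum h.hasSum (fun n ↦ (Real.exp_pos _).le)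
    fun φ ↦ (tiltedWeight_pos Q ℓ φ).le
  rw [← shear.hasSum_iff] at hmul
  exact hmul.congr_fun fun p ↦ (exp_mul_tiltedWeight_add Q D T ℓ p.1 p.2).symm

theorem summable_tiltedWeight_fiber (hR : Summable fun n ↦ Real.exp (-(D n - Q (T n))))
    (h : Summable (tiltedWeight Q ℓ)) (φ : Λ) :
    Summable (tiltedWeight D ((ℓ - Q.polarBilin φ) ∘ₗ T)) :=
  (summable_mul_left_iff (tiltedWeight_pos Q ℓ φ).ne').1
    ((hasSum_joint hR h).summable.prod_factor φ)

theorem hasSum_fiberSum (hR : Summable fun n ↦ Real.exp (-(D n - Q (T n))))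
    (h : Summable (tiltedWeight Q ℓ)) :
    HasSum (fiberSum Q D T ℓ) ((∑' n, Real.exp (-(D n - Q (T n)))) * laplaceSum Q ℓ) :=
  (hasSum_joint hR h).prod_fiberwise fun φ ↦
    (summable_tiltedWeight_fiber hR h φ).hasSum.mul_left (tiltedWeight Q ℓ φ)

theorem fiberSum_nonneg (Q : QuadraticMap ℤ Λ ℝ) (D : QuadraticMap ℤ Γ ℝ) (T : Γ →ₗ[ℤ] Λ)
    (ℓ : Λ →ₗ[ℤ] ℝ) (φ : Λ) : 0 ≤ fiberSum Q D T ℓ φ :=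
  mul_nonneg (tiltedWeight_pos Q ℓ φ).le (laplaceSum_nonneg _ _)

theorem laplaceSum_mul_fiberSum_zero_sq_le [IsAddTorsionFree Γ]
    (hR : Summable fun n ↦ Real.exp (-(D n - Q (T n)))) (h : Summable (tiltedWeight Q ℓ)) (φ : Λ) :
    (laplaceSum D (ℓ ∘ₗ T) * fiberSum Q D T 0 φ) ^ 2 ≤
      laplaceSum D 0 ^ 2 * (fiberSum Q D T ℓ φ * fiberSum Q D T (-ℓ) φ) := by
  have hadd : -Q.polarBilin φ ∘ₗ T + ℓ ∘ₗ T = (ℓ - Q.polarBilin φ) ∘ₗ T := by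
    rw [LinearMap.sub_comp, neg_add_eq_sub]
  have hsub : -Q.polarBilin φ ∘ₗ T - ℓ ∘ₗ T = (-ℓ - Q.polarBilin φ) ∘ₗ T := by
    rw [LinearMap.sub_comp, LinearMap.neg_comp, neg_sub_left, neg_sub_left, add_comm]
  have htheta := laplaceSum_mul_sq_le (hadd ▸ summable_tiltedWeight_fiber hR h φ)
    (hsub ▸ summable_tiltedWeight_fiber hR (summable_tiltedWeight_neg h) φ)
  rw [hadd, hsub] at htheta
  have hweight : tiltedWeight Q ℓ φ * tiltedWeight Q (-ℓ) φ = tiltedWeight Q 0 φ ^ 2 := by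
    simp only [tiltedWeight, ← Real.exp_add, ← Real.exp_nat_mul, LinearMap.neg_apply,
      LinearMap.zero_apply]
    ring_nf
  simp only [fiberSum, zero_sub, LinearMap.neg_comp]
  calc _ = tiltedWeight Q 0 φ ^ 2 *
        (laplaceSum D (-Q.polarBilin φ ∘ₗ T) * laplaceSum D (ℓ ∘ₗ T)) ^ 2 := by ring
    _ ≤ tiltedWeight Q 0 φ ^ 2 * (laplaceSum D ((ℓ - Q.polarBilin φ) ∘ₗ T) * laplaceSum D 0 *
        (laplaceSum D ((-ℓ - Q.polarBilin φ) ∘ₗ T) * laplaceSum D 0)) := by gcongr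
    _ = _ := by rw [← hweight]; ring

theorem two_mul_laplaceSum_mul_fiberSum_zero_le [IsAddTorsionFree Γ]
    (hR : Summable fun n ↦ Real.exp (-(D n - Q (T n)))) (h : Summable (tiltedWeight Q ℓ)) (φ : Λ) :
    2 * (laplaceSum D (ℓ ∘ₗ T) * fiberSum Q D T 0 φ) ≤
      laplaceSum D 0 * (fiberSum Q D T ℓ φ + fiberSum Q D T (-ℓ) φ) := by
  have hsq := laplaceSum_mul_fiberSum_zero_sq_le hR h φ
  have hamgm := mul_le_mul_of_nonneg_left
    (four_mul_le_sq_add (fiberSum Q D T ℓ φ) (fiberSum Q D T (-ℓ) φ)) (sq_nonneg (laplaceSum D 0))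
  refine (abs_le_of_sq_le_sq' ?_ ?_).2
  · rw [mul_pow, mul_pow (laplaceSum D 0)]
    linarith
  · exact mul_nonneg (laplaceSum_nonneg _ _)
      (add_nonneg (fiberSum_nonneg _ _ _ _ _) (fiberSum_nonneg _ _ _ _ _))

/-- Conditionally on `φ`, the shift has energy `D` and a linear tilt, to which the inequality
`laplaceSum_mul_sq_le` on `Γ` applies; AM–GM then allows summing over `φ`. -/
theorem laplaceSum_comp_mul_le [IsAddTorsionFree Γ]
    (hR : Summable fun n ↦ Real.exp (-(D n - Q (T n)))) (h : Summable (tiltedWeight Q ℓ)) :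
    laplaceSum D (ℓ ∘ₗ T) * laplaceSum Q 0 ≤ laplaceSum D 0 * laplaceSum Q ℓ := by
  have hS : 0 < ∑' n, Real.exp (-(D n - Q (T n))) :=
    hR.tsum_pos (fun n ↦ (Real.exp_pos _).le) 0 (Real.exp_pos _)
  have hsum := hasSum_le (two_mul_laplaceSum_mul_fiberSum_zero_le hR h)
    (((hasSum_fiberSum hR (summable_tiltedWeight_zero h)).mul_left _).mul_left 2)
    (((hasSum_fiberSum hR h).add (hasSum_fiberSum hR (summable_tiltedWeight_neg h))).mul_left _)
  rw [laplaceSum_neg] at hsum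
  refine le_of_mul_le_mul_left ?_ hS
  linarith

end Comparison

section ProductGaussian

theorem hasSum_tiltedWeight_pi {Λ ι : Type*} [AddCommGroup Λ] [Fintype ι]
    {Q : QuadraticMap ℤ Λ ℝ} {ℓ : Λ →ₗ[ℤ] ℝ} (h : Summable (tiltedWeight Q ℓ)) :
    HasSum (tiltedWeight (QuadraticMap.pi fun _ : ι ↦ Q) (∑ i, ℓ ∘ₗ LinearMap.proj i))
      (laplaceSum Q ℓ ^ Fintype.card ι) := by
  have hprod := hasSum_prod_apply_pi (ι := ι) (fun _ φ ↦ (tiltedWeight_pos Q ℓ φ).le)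
    fun _ ↦ h.hasSum
  rw [Finset.prod_const, Finset.card_univ] at hprod
  refine hprod.congr_fun fun φ ↦ ?_
  simp [tiltedWeight, ← Real.exp_sum, QuadraticMap.pi_apply]

theorem IsConfining.pi {Λ ι : Type*} [AddCommGroup Λ] [Fintype ι] {Q : QuadraticMap ℤ Λ ℝ}
    (hQ : IsConfining Q) : IsConfining (QuadraticMap.pi fun _ : ι ↦ Q) := by
  intro δ hδ
  refine (hasSum_prod_apply_pi (ι := ι) (fun _ φ ↦ (Real.exp_pos (-(δ * Q φ))).le)
    fun _ ↦ (hQ δ hδ).hasSum).summable.congr fun φ ↦ ?_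
  rw [← Real.exp_sum, QuadraticMap.pi_apply, Finset.mul_sum, Finset.sum_neg_distrib]

/-- The energy `n ↦ C n²` on `ℤ`. -/
noncomputable def intSq (C : ℝ) : QuadraticMap ℤ ℤ ℝ :=
  C • QuadraticMap.linMulLin (Algebra.linearMap ℤ ℝ) (Algebra.linearMap ℤ ℝ)

@[simp]
theorem intSq_apply (C : ℝ) (n : ℤ) : intSq C n = C * (n : ℝ) ^ 2 := by
  simp [intSq, sq]

theorem isConfining_intSq {C : ℝ} (hC : 0 < C) : IsConfining (intSq C) := by
  intro δ hδ
  have hT : 0 < δ * C / Real.pi := div_pos (mul_pos hδ hC) Real.pi_pos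
  refine (summable_pow_mul_jacobiTheta₂_term_bound 0 hT 0).congr fun n ↦ ?_
  rw [intSq_apply]
  field_simp
  simp

/-- The variance of the discrete Gaussian on `ℤ` with weights `exp (-C n²)`. -/
noncomputable def intVariance (C : ℝ) : ℝ :=
  secondMoment (intSq C) (Algebra.linearMap ℤ ℝ) / laplaceSum (intSq C) 0

theorem summable_tiltedWeight_intSq {C : ℝ} (hC : 0 < C) (t : ℝ) :
    Summable (tiltedWeight (intSq C) (t • Algebra.linearMap ℤ ℝ)) :=
  (isConfining_intSq hC).summable_tiltedWeight_smul (one_div_pos.2 hC)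
    (fun n ↦ by simp [hC.ne']) t

theorem intVariance_pos {C : ℝ} (hC : 0 < C) : 0 < intVariance C := by
  have h := summable_sq_mul_exp_neg (by simpa using summable_tiltedWeight_intSq hC 1)
  exact div_pos (h.tsum_pos (fun n ↦ by positivity) 1 (by simp [Real.exp_pos]))
    (isConfining_intSq hC).laplaceSum_zero_pos

theorem one_add_mul_laplaceSum_intSq_le {C : ℝ} (hC : 0 < C) (t : ℝ) :
    (1 + intVariance C * t ^ 2 / 2) * laplaceSum (intSq C) 0 ≤
      laplaceSum (intSq C) (t • Algebra.linearMap ℤ ℝ) := by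
  have h := laplaceSum_zero_add_half_secondMoment_le (summable_tiltedWeight_intSq hC t)
  rw [secondMoment_smul] at h
  refine le_trans (le_of_eq ?_) h
  have := (isConfining_intSq hC).laplaceSum_zero_pos.ne'
  rw [intVariance]
  field_simp

theorem one_add_card_mul_laplaceSum_pi_le {ι : Type*} [Fintype ι] {C : ℝ} (hC : 0 < C) (t : ℝ) :
    (1 + Fintype.card ι * intVariance C * t ^ 2 / 2) *
        laplaceSum (QuadraticMap.pi fun _ : ι ↦ intSq C) 0 ≤
      laplaceSum (QuadraticMap.pi fun _ : ι ↦ intSq C)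
        (t • ∑ i, Algebra.linearMap ℤ ℝ ∘ₗ LinearMap.proj i) := by
  have hpi (s : ℝ) : laplaceSum (QuadraticMap.pi fun _ : ι ↦ intSq C)
      (s • ∑ i, Algebra.linearMap ℤ ℝ ∘ₗ LinearMap.proj i) =
        laplaceSum (intSq C) (s • Algebra.linearMap ℤ ℝ) ^ Fintype.card ι := by
    rw [← (hasSum_tiltedWeight_pi (summable_tiltedWeight_intSq hC s)).tsum_eq, laplaceSum,
      Finset.smul_sum]
    rfl
  have hpos := intVariance_pos hC
  have hbernoulli := one_add_mul_le_pow (a := intVariance C * t ^ 2 / 2)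
    (by linarith [show 0 ≤ intVariance C * t ^ 2 / 2 by positivity]) (Fintype.card ι)
  have hzero := hpi 0
  rw [zero_smul, zero_smul] at hzero
  rw [hzero, hpi t]
  have hZ := (isConfining_intSq hC).laplaceSum_zero_pos
  calc _ ≤ (1 + intVariance C * t ^ 2 / 2) ^ Fintype.card ι *
        laplaceSum (intSq C) 0 ^ Fintype.card ι := by
          gcongr; exact le_trans (le_of_eq (by ring)) hbernoulli
    _ = ((1 + intVariance C * t ^ 2 / 2) * laplaceSum (intSq C) 0) ^ Fintype.card ι :=
      (mul_pow _ _ _).symm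
    _ ≤ _ := pow_le_pow_left₀ (by positivity) (one_add_mul_laplaceSum_intSq_le hC t) _

theorem card_mul_intVariance_mul_le_secondMoment {Λ ι : Type*} [AddCommGroup Λ] [Fintype ι]
    {Q : QuadraticMap ℤ Λ ℝ} {ℓ : Λ →ₗ[ℤ] ℝ} {K C : ℝ} (hQ : IsConfining Q) (hK : 0 < K)
    (hℓ : ∀ φ, ℓ φ ^ 2 ≤ K * Q φ) (hC : 0 < C) (T : (ι → ℤ) →ₗ[ℤ] Λ)
    (hℓT : ∀ n, ℓ (T n) = ∑ i, (n i : ℝ))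
    (hQT : ∀ n, Q (T n) + ∑ i, (n i : ℝ) ^ 2 ≤ C * ∑ i, (n i : ℝ) ^ 2) :
    Fintype.card ι * intVariance C * laplaceSum Q 0 ≤ secondMoment Q ℓ := by
  have hR : Summable fun n ↦ Real.exp (-(QuadraticMap.pi (fun _ : ι ↦ intSq C) n - Q (T n))) := by
    refine ((isConfining_intSq one_pos).pi 1 one_pos).of_nonneg_of_le
      (fun n ↦ (Real.exp_pos _).le) fun n ↦ Real.exp_le_exp.2 ?_
    simp only [QuadraticMap.pi_apply, intSq_apply, one_mul, ← Finset.mul_sum]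
    linarith [hQT n]
  have hcomp : ℓ ∘ₗ T = ∑ i, Algebra.linearMap ℤ ℝ ∘ₗ LinearMap.proj i := by
    ext i
    simp [hℓT]
  refine mul_laplaceSum_le_secondMoment hQ hK hℓ fun t ↦ ?_
  have hle := laplaceSum_comp_mul_le hR (hQ.summable_tiltedWeight_smul hK hℓ t)
  rw [LinearMap.smul_comp, hcomp] at hle
  have hZ : 0 < laplaceSum (QuadraticMap.pi fun _ : ι ↦ intSq C) 0 :=
    (isConfining_intSq hC).pi.laplaceSum_zero_pos
  have hQ₀ := laplaceSum_nonneg Q 0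
  refine le_of_mul_le_mul_left (le_trans ?_ hle) hZ
  calc _ = (1 + Fintype.card ι * intVariance C * t ^ 2 / 2) *
        laplaceSum (QuadraticMap.pi fun _ : ι ↦ intSq C) 0 * laplaceSum Q 0 := by ring
    _ ≤ _ := by gcongr; exact one_add_card_mul_laplaceSum_pi_le hC t

end ProductGaussian

section SumOfSquares

theorem summable_mul_of_summable_sq {ι : Type*} {f g : ι → ℝ} (hf : Summable fun i ↦ f i ^ 2)
    (hg : Summable fun i ↦ g i ^ 2) : Summable fun i ↦ f i * g i := by
  refine .of_norm_bounded (hf.add hg) fun i ↦ ?_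
  rw [Real.norm_eq_abs, abs_mul, ← sq_abs (f i), ← sq_abs (g i)]
  nlinarith [two_mul_le_add_sq |f i| |g i|, sq_nonneg |f i|, sq_nonneg |g i|]

/-- The energy `∑ fᵢ(φ)²` of a square-summable family of linear functionals. -/
noncomputable def sumSq {Λ ι : Type*} [AddCommGroup Λ] (f : ι → Λ →ₗ[ℤ] ℝ)
    (hf : ∀ φ, Summable fun i ↦ f i φ ^ 2) : QuadraticMap ℤ Λ ℝ :=
  LinearMap.BilinMap.toQuadraticMap <| LinearMap.mk₂ ℤ (fun φ ψ ↦ ∑' i, f i φ * f i ψ)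
    (fun φ φ' ψ ↦ by
      simp only [map_add, add_mul]
      exact (summable_mul_of_summable_sq (hf φ) (hf ψ)).tsum_add
        (summable_mul_of_summable_sq (hf φ') (hf ψ)))
    (fun c φ ψ ↦ by simp only [map_smul, zsmul_eq_mul, mul_assoc, tsum_mul_left])
    (fun φ ψ ψ' ↦ by
      simp only [map_add, mul_add]
      exact (summable_mul_of_summable_sq (hf φ) (hf ψ)).tsum_add
        (summable_mul_of_summable_sq (hf φ) (hf ψ')))
    (fun c φ ψ ↦ by simp only [map_smul, zsmul_eq_mul, mul_left_comm _ (c : ℝ), tsum_mul_left])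

theorem sumSq_apply {Λ ι : Type*} [AddCommGroup Λ] (f : ι → Λ →ₗ[ℤ] ℝ)
    (hf : ∀ φ, Summable fun i ↦ f i φ ^ 2) (φ : Λ) : sumSq f hf φ = ∑' i, f i φ ^ 2 := by
  simp only [sumSq, LinearMap.BilinMap.toQuadraticMap_apply, LinearMap.mk₂_apply, sq]

theorem IsConfining.of_comp_le {Λ Γ : Type*} [AddCommGroup Λ] [AddCommGroup Γ]
    {Q : QuadraticMap ℤ Λ ℝ} {D : QuadraticMap ℤ Γ ℝ} (hD : IsConfining D) {R : Λ → Γ}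
    (hR : Function.Injective R) (h : ∀ φ, D (R φ) ≤ Q φ) : IsConfining Q := fun δ hδ ↦
  ((hD δ hδ).comp_injective hR).of_nonneg_of_le (fun _ ↦ (Real.exp_pos _).le) fun φ ↦
    Real.exp_le_exp.2 (neg_le_neg (mul_le_mul_of_nonneg_left (h φ) hδ.le))

end SumOfSquares

section GagliardoEnergy

variable {α : ℝ} {x : ℤ → ℝ}

/-- The contribution of the pair `p` to the discrete Gagliardo energy of `x`; it vanishes on the
diagonal because its numerator does. -/
noncomputable def energyDensity (α : ℝ) (x : ℤ → ℝ) (p : ℤ × ℤ) : ℝ :=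
  (x p.1 - x p.2) ^ 2 / |((p.1 - p.2 : ℤ) : ℝ)| ^ α

/-- The discrete Gagliardo energy `∑ |x i - x j|² / |i - j|^α` of `x : ℤ → ℝ`. -/
noncomputable def gagliardoEnergy (α : ℝ) (x : ℤ → ℝ) : ℝ :=
  ∑' p, energyDensity α x p

theorem energyDensity_nonneg (α : ℝ) (x : ℤ → ℝ) (p : ℤ × ℤ) : 0 ≤ energyDensity α x p := by
  unfold energyDensity
  positivity

theorem gagliardoEnergy_nonneg (α : ℝ) (x : ℤ → ℝ) : 0 ≤ gagliardoEnergy α x :=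
  tsum_nonneg (energyDensity_nonneg α x)

theorem summable_energyDensity (hα : 1 < α) (hx : x.support.Finite) :
    Summable (energyDensity α x) := by
  have hprod : Summable fun p : ℤ × ℤ ↦ x p.1 ^ 2 * |((p.2 : ℤ) : ℝ)| ^ (-α) :=
    Summable.mul_of_nonneg (f := fun k ↦ x k ^ 2) (g := fun r : ℤ ↦ |(r : ℝ)| ^ (-α))
      (summable_of_hasFiniteSupport (hx.subset fun k hk hk₀ ↦ hk (by simp [hk₀])))
      (Real.summable_abs_int_rpow hα) (fun k ↦ sq_nonneg (x k)) fun r ↦ by positivity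
  have hfst : Summable fun p : ℤ × ℤ ↦ x p.1 ^ 2 * |((p.1 - p.2 : ℤ) : ℝ)| ^ (-α) :=
    (Equiv.prodShear (Equiv.refl ℤ) Equiv.subLeft).summable_iff.2 hprod
  have hsnd : Summable fun p : ℤ × ℤ ↦ x p.2 ^ 2 * |((p.1 - p.2 : ℤ) : ℝ)| ^ (-α) := by
    refine ((Equiv.prodComm ℤ ℤ).summable_iff.2 hfst).congr fun p ↦ ?_
    simp only [Function.comp_apply, Equiv.prodComm_apply, Prod.fst_swap, Prod.snd_swap,
      ← neg_sub p.1 p.2, Int.cast_neg, abs_neg]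
  refine ((hfst.add hsnd).mul_left 2).of_nonneg_of_le (energyDensity_nonneg α x) fun p ↦ ?_
  rw [energyDensity, div_eq_mul_inv, ← Real.rpow_neg (abs_nonneg _), ← add_mul, ← mul_assoc]
  gcongr
  linarith [sq_nonneg (x p.1 + x p.2)]

theorem sq_sub_le_mul_energyDensity (hα : 0 ≤ α) {i j : ℤ} {L : ℝ}
    (hL : |((i - j : ℤ) : ℝ)| ≤ L) : (x i - x j) ^ 2 ≤ L ^ α * energyDensity α x (i, j) := by
  obtain rfl | hij := eq_or_ne i j
  · simp [energyDensity]
  have : 0 < |((i - j : ℤ) : ℝ)| := by simpa [sub_eq_zero] using hij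
  rw [energyDensity, ← mul_div_assoc, le_div_iff₀ (by positivity), mul_comm]
  gcongr

theorem sq_sub_le_mul_gagliardoEnergy (hα : 0 ≤ α) (hx : Summable (energyDensity α x)) {i j : ℤ}
    {L : ℝ} (hL : |((i - j : ℤ) : ℝ)| ≤ L) : (x i - x j) ^ 2 ≤ L ^ α * gagliardoEnergy α x := by
  have hL₀ : 0 ≤ L := (abs_nonneg _).trans hL
  refine (sq_sub_le_mul_energyDensity hα hL).trans ?_
  gcongr
  exact hx.le_tsum _ fun p _ ↦ energyDensity_nonneg α x p

end GagliardoEnergy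

section ChainForm

/-- The configurations of the chain as a subgroup of all height functions. -/
def chainSubgroup (N : ℕ) : AddSubgroup (ℤ → ℤ) where
  carrier := {φ | ∀ k : ℤ, (N : ℤ) < |k| → φ k = 0}
  zero_mem' _ _ := rfl
  add_mem' hφ hψ k hk := by rw [Pi.add_apply, hφ k hk, hψ k hk, add_zero]
  neg_mem' hφ k hk := by rw [Pi.neg_apply, hφ k hk, neg_zero]

instance (N : ℕ) : AddCommGroup (ChainConfig N) :=
  inferInstanceAs (AddCommGroup (chainSubgroup N))

instance (N : ℕ) : IsAddTorsionFree (ChainConfig N) :=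
  inferInstanceAs (IsAddTorsionFree (chainSubgroup N))

/-- The height `φ ↦ φ(k)` at the site `k`, as a real-valued linear functional. -/
noncomputable def heightAt {N : ℕ} (k : ℤ) : ChainConfig N →ₗ[ℤ] ℝ :=
  Algebra.linearMap ℤ ℝ ∘ₗ LinearMap.proj k ∘ₗ (chainSubgroup N).subtype.toIntLinearMap

variable {N : ℕ} {α β : ℝ}

theorem heightAt_apply (k : ℤ) (φ : ChainConfig N) : heightAt k φ = (φ.val k : ℝ) := rfl

/-- The height profile of a configuration, viewed in `ℤ → ℝ`. -/
def heightProfile (φ : ChainConfig N) : ℤ → ℝ := fun k ↦ (φ.val k : ℝ)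

theorem heightProfile_eq_zero (φ : ChainConfig N) {k : ℤ} (hk : (N : ℤ) < |k|) :
    heightProfile φ k = 0 := by
  rw [heightProfile, φ.2 k hk, Int.cast_zero]

theorem summable_energyDensity_heightProfile (hα : 1 < α) (φ : ChainConfig N) :
    Summable (energyDensity α (heightProfile φ)) := by
  refine summable_energyDensity hα ((Set.finite_Icc (-(N : ℤ)) N).subset fun k hk ↦ ?_)
  rw [Set.mem_Icc, ← abs_le]
  exact not_lt.1 fun h ↦ hk (heightProfile_eq_zero φ h)

/-- The functional whose square is the contribution of the pair `p` to the energy. -/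
noncomputable def bond (α : ℝ) (p : ℤ × ℤ) : ChainConfig N →ₗ[ℤ] ℝ :=
  (√(|((p.1 - p.2 : ℤ) : ℝ)| ^ α))⁻¹ • (heightAt p.1 - heightAt p.2)

theorem bond_sq (α : ℝ) (φ : ChainConfig N) (p : ℤ × ℤ) :
    bond α p φ ^ 2 = energyDensity α (heightProfile φ) p := by
  simp only [bond, energyDensity, heightProfile, LinearMap.smul_apply, LinearMap.sub_apply,
    heightAt_apply, smul_eq_mul, mul_pow, inv_pow]
  rw [Real.sq_sqrt (by positivity), inv_mul_eq_div]

/-- The energy of the discrete Gaussian chain as a quadratic form on its lattice of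
configurations. -/
noncomputable def chainForm (N : ℕ) (β : ℝ) (hα : 1 < α) : QuadraticMap ℤ (ChainConfig N) ℝ :=
  β • sumSq (bond α) fun φ ↦
    (summable_energyDensity_heightProfile hα φ).congr fun p ↦ (bond_sq α φ p).symm

theorem chainForm_apply (hα : 1 < α) (φ : ChainConfig N) :
    chainForm N β hα φ = β * gagliardoEnergy α (heightProfile φ) := by
  simp only [chainForm, smul_apply, smul_eq_mul, sumSq_apply, bond_sq, gagliardoEnergy]

theorem chainEnergy_two (hα : 1 < α) (φ : ChainConfig N) :
    chainEnergy β α 2 φ.val = chainForm N β hα φ := by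
  rw [chainForm_apply, chainEnergy, gagliardoEnergy]
  congr 1
  refine tsum_congr fun p ↦ ?_
  split_ifs with hp
  · simp [energyDensity, hp]
  · simp [energyDensity, heightProfile]

theorem sq_heightProfile_le (hα : 1 < α) (φ : ChainConfig N) {k : ℤ} (hk : |k| ≤ N) :
    heightProfile φ k ^ 2 ≤ (2 * N + 1) ^ α * gagliardoEnergy α (heightProfile φ) := by
  have hdist : |((k - (N + 1) : ℤ) : ℝ)| ≤ 2 * N + 1 := by
    have : |k - (N + 1)| ≤ 2 * N + 1 := by grind
    exact_mod_cast this
  have h := sq_sub_le_mul_gagliardoEnergy (by linarith)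
    (summable_energyDensity_heightProfile hα φ) hdist
  rwa [heightProfile_eq_zero φ (k := N + 1) (by grind), sub_zero] at h

theorem isConfining_chainForm (hβ : 0 < β) (hα : 1 < α) : IsConfining (chainForm N β hα) := by
  have hC : 0 < β / ((2 * N + 1) * (2 * N + 1) ^ α) := by positivity
  refine (isConfining_intSq hC).pi.of_comp_le
    (R := fun φ (k : Finset.Icc (-(N : ℤ)) N) ↦ φ.val k) (fun φ ψ h ↦ ?_) fun φ ↦ ?_
  · refine Subtype.ext (funext fun k ↦ ?_)
    obtain hk | hk := lt_or_ge (N : ℤ) |k|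
    · rw [φ.2 k hk, ψ.2 k hk]
    · exact congrFun h ⟨k, Finset.mem_Icc.2 (abs_le.1 hk)⟩
  · have hsum : ∑ k : Finset.Icc (-(N : ℤ)) N, heightProfile φ k ^ 2 ≤
        (2 * N + 1) * ((2 * N + 1) ^ α * gagliardoEnergy α (heightProfile φ)) := by
      refine (Finset.sum_le_card_nsmul _ _ _ fun k _ ↦
        sq_heightProfile_le hα φ (abs_le.2 (Finset.mem_Icc.1 k.2))).trans_eq ?_
      have hcard : ((N : ℤ) + 1 + N).toNat = 2 * N + 1 := by omega
      simp [hcard]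
    simp only [QuadraticMap.pi_apply, intSq_apply, ← Finset.mul_sum, chainForm_apply]
    rw [div_mul_eq_mul_div, div_le_iff₀ (by positivity)]
    calc _ ≤ β * _ := mul_le_mul_of_nonneg_left hsum hβ.le
      _ = _ := by ring

theorem chainZ_two (hα : 1 < α) : chainZ N β α 2 = laplaceSum (chainForm N β hα) 0 := by
  simp only [chainZ, chainWeight, chainEnergy_two hα, laplaceSum, tiltedWeight_zero]

theorem chainMean_two (hα : 1 < α) : chainMean N β α 2 = 0 := by
  suffices h : ∑' φ : ChainConfig N, (φ.val 0 : ℝ) * chainWeight β α 2 φ.val = 0 by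
    rw [chainMean, h, zero_div]
  rw [← self_eq_neg, ← tsum_neg, ← (Equiv.neg (ChainConfig N)).tsum_eq]
  refine tsum_congr fun φ ↦ ?_
  simp only [chainWeight, chainEnergy_two hα, ← heightAt_apply, Equiv.neg_apply, map_neg,
    QuadraticMap.map_neg, neg_mul]

theorem chainVar_two (hα : 1 < α) :
    chainVar N β α 2 = secondMoment (chainForm N β hα) (heightAt 0) /
      laplaceSum (chainForm N β hα) 0 := by
  simp only [chainVar, chainMean_two hα, chainZ_two hα, secondMoment, heightAt_apply, chainWeight,
    chainEnergy_two hα, ne_eq, OfNat.ofNat_ne_zero, not_false_eq_true, zero_pow, sub_zero]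

end ChainForm

section Sobolev

variable {α : ℝ} {x : ℤ → ℝ}

theorem card_mul_card_mul_sq_sub_average_le (hα : 0 ≤ α) (hx : Summable (energyDensity α x))
    {I J : Finset ℤ} (hI : I.Nonempty) (hJ : J.Nonempty) {L : ℝ}
    (hL : ∀ i ∈ I, ∀ j ∈ J, |((i - j : ℤ) : ℝ)| ≤ L) :
    (I.card * J.card : ℝ) * ((∑ i ∈ I, x i) / I.card - (∑ j ∈ J, x j) / J.card) ^ 2 ≤
      L ^ α * gagliardoEnergy α x := by
  have hcard : (0 : ℝ) < I.card * J.card := by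
    have := hI.card_pos
    have := hJ.card_pos
    positivity
  have hL₀ : 0 ≤ L := by
    obtain ⟨i, hi⟩ := hI
    obtain ⟨j, hj⟩ := hJ
    exact (abs_nonneg _).trans (hL i hi j hj)
  have hdiff : (I.card * J.card : ℝ) * ((∑ i ∈ I, x i) / I.card - (∑ j ∈ J, x j) / J.card) =
      ∑ p ∈ I ×ˢ J, (x p.1 - x p.2) := by
    have hI₀ : (I.card : ℝ) ≠ 0 := left_ne_zero_of_mul hcard.ne'
    have hJ₀ : (J.card : ℝ) ≠ 0 := right_ne_zero_of_mul hcard.ne'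
    rw [Finset.sum_product]
    simp only [Finset.sum_sub_distrib, Finset.sum_const, nsmul_eq_mul, ← Finset.mul_sum]
    field_simp
  have hcauchy := sq_sum_le_card_mul_sum_sq (s := I ×ˢ J) (f := fun p ↦ x p.1 - x p.2)
  rw [← hdiff, Finset.card_product, Nat.cast_mul] at hcauchy
  have henergy : ∑ p ∈ I ×ˢ J, (x p.1 - x p.2) ^ 2 ≤ L ^ α * gagliardoEnergy α x := by
    calc _ ≤ ∑ p ∈ I ×ˢ J, L ^ α * energyDensity α x p := by
          refine Finset.sum_le_sum fun p hp ↦ ?_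
          rw [Finset.mem_product] at hp
          exact sq_sub_le_mul_energyDensity hα (hL p.1 hp.1 p.2 hp.2)
      _ ≤ _ := by
          rw [← Finset.mul_sum]
          gcongr
          exact hx.sum_le_tsum _ fun p _ ↦ energyDensity_nonneg α x p
  refine le_of_mul_le_mul_left (le_trans ?_ (hcauchy.trans ?_)) hcard
  · exact le_of_eq (by ring)
  · gcongr

/-- The average of `x` over the dyadic block `[2ᵏ, 2ᵏ⁺¹)`. -/
noncomputable def dyadicAverage (x : ℤ → ℝ) (k : ℕ) : ℝ :=
  (∑ i ∈ Finset.Ico ((2 : ℤ) ^ k) (2 ^ (k + 1)), x i) / 2 ^ k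

theorem card_Ico_two_pow (k : ℕ) : (Finset.Ico ((2 : ℤ) ^ k) (2 ^ (k + 1))).card = 2 ^ k := by
  rw [Int.card_Ico, pow_succ, mul_two, add_sub_cancel_right]
  exact_mod_cast Int.toNat_natCast (2 ^ k)

theorem dyadicAverage_zero (x : ℤ → ℝ) : dyadicAverage x 0 = x 1 := by
  simp [dyadicAverage, show Finset.Ico (1 : ℤ) 2 = {1} from rfl]

theorem abs_dyadicAverage_sub_le (hα : 0 ≤ α) (hx : Summable (energyDensity α x)) (k : ℕ) :
    |dyadicAverage x k - dyadicAverage x (k + 1)| ≤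
      2 ^ α * √(2 ^ (α - 2)) ^ k * √(gagliardoEnergy α x) := by
  have hlt (k : ℕ) : (2 : ℤ) ^ k < 2 ^ (k + 1) := pow_lt_pow_right₀ one_lt_two k.lt_succ_self
  have h := card_mul_card_mul_sq_sub_average_le hα hx (L := 4 * 2 ^ k)
    (Finset.nonempty_Ico.2 (hlt k)) (Finset.nonempty_Ico.2 (hlt (k + 1))) fun i hi j hj ↦ by
      have hdist : |i - j| ≤ 4 * 2 ^ k := by
        rw [Finset.mem_Ico] at hi hj
        have := pow_pos (two_pos (α := ℤ)) k
        rw [pow_succ] at hi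
        rw [pow_succ, pow_succ] at hj
        grind
      exact_mod_cast hdist
  simp only [card_Ico_two_pow, Nat.cast_pow, Nat.cast_ofNat] at h
  have hscale : ((4 : ℝ) * 2 ^ k) ^ α = (2 ^ k) ^ 2 * (2 ^ α * √(2 ^ (α - 2)) ^ k) ^ 2 := by
    have hsq : (√((2 : ℝ) ^ (α - 2)) ^ k) ^ 2 = (2 ^ k) ^ (α - 2) := by
      rw [pow_right_comm, Real.sq_sqrt (by positivity), Real.rpow_pow_comm two_pos.le]
    rw [mul_pow, hsq, Real.mul_rpow four_pos.le (by positivity),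
      Real.rpow_pow_comm two_pos.le, Real.rpow_sub (by positivity), Real.rpow_two]
    norm_num
    field_simp
  refine abs_le_of_sq_le_sq ?_ (by positivity)
  rw [mul_pow, Real.sq_sqrt (gagliardoEnergy_nonneg α x)]
  refine le_of_mul_le_mul_left (a := ((2 : ℝ) ^ k) ^ 2) ?_ (by positivity)
  calc _ ≤ ((2 : ℝ) ^ k * 2 ^ (k + 1)) * (dyadicAverage x k - dyadicAverage x (k + 1)) ^ 2 := by
        rw [pow_two]
        gcongr <;> simp
    _ ≤ _ := h
    _ = _ := by rw [hscale, mul_assoc]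

theorem one_lt_sqrt_two_rpow (hα : 2 < α) : 1 < √((2 : ℝ) ^ (α - 2)) :=
  Real.lt_sqrt_of_sq_lt (by simpa using Real.one_lt_rpow one_lt_two (sub_pos.2 hα))

theorem abs_sub_dyadicAverage_le (hα : 2 < α) (hx : Summable (energyDensity α x)) (k : ℕ) :
    |x 0 - dyadicAverage x k| ≤
      2 ^ α / (√(2 ^ (α - 2)) - 1) * √(2 ^ (α - 2)) ^ k * √(gagliardoEnergy α x) := by
  have hq₀ : 0 < √((2 : ℝ) ^ (α - 2)) - 1 := sub_pos.2 (one_lt_sqrt_two_rpow hα)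
  induction k with
  | zero =>
    have hD : 1 ≤ 2 ^ α / (√((2 : ℝ) ^ (α - 2)) - 1) := by
      have hle : √((2 : ℝ) ^ (α - 2)) ≤ 2 ^ α :=
        (Real.sqrt_le_self_iff.2 (.inr (Real.one_le_rpow one_le_two (by linarith)))).trans
          (Real.rpow_le_rpow_of_exponent_le one_le_two (by linarith))
      rw [one_le_div hq₀]
      linarith
    have h : |x 0 - x 1| ≤ √(gagliardoEnergy α x) := Real.abs_le_sqrt <| by
      simpa using sq_sub_le_mul_gagliardoEnergy (i := 0) (j := 1) (L := 1) (by linarith) hx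
        (by simp)
    simpa [dyadicAverage_zero] using h.trans (le_mul_of_one_le_left (Real.sqrt_nonneg _) hD)
  | succ k ih =>
    refine (abs_sub_le _ (dyadicAverage x k) _).trans
      ((add_le_add ih (abs_dyadicAverage_sub_le (by linarith) hx k)).trans_eq ?_)
    field_simp
    ring

theorem exists_sq_le_mul_rpow_mul_gagliardoEnergy (hα : 2 < α) : ∃ K : ℝ, 0 < K ∧
    ∀ (N : ℕ) (x : ℤ → ℝ), N ≠ 0 → Summable (energyDensity α x) →
      (∀ k : ℤ, (N : ℤ) < |k| → x k = 0) →
        x 0 ^ 2 ≤ K * (N : ℝ) ^ (α - 2) * gagliardoEnergy α x := by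
  have : 0 < √((2 : ℝ) ^ (α - 2)) - 1 := sub_pos.2 (one_lt_sqrt_two_rpow hα)
  refine ⟨(2 ^ α / (√(2 ^ (α - 2)) - 1)) ^ 2 * 2 ^ (α - 2), by positivity,
    fun N x hN hx hsupp ↦ ?_⟩
  have hlast : dyadicAverage x (Nat.log 2 N + 1) = 0 := by
    refine div_eq_zero_iff.2 (.inl (Finset.sum_eq_zero fun i hi ↦ hsupp i ?_))
    have hlog : (N : ℤ) < 2 ^ (Nat.log 2 N + 1) := by
      exact_mod_cast Nat.lt_pow_succ_log_self one_lt_two N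
    exact (hlog.trans_le (Finset.mem_Ico.1 hi).1).trans_le (le_abs_self i)
  have hlog : (√((2 : ℝ) ^ (α - 2)) ^ (Nat.log 2 N + 1)) ^ 2 ≤ 2 ^ (α - 2) * N ^ (α - 2) := by
    rw [pow_right_comm, Real.sq_sqrt (by positivity), pow_succ', Real.rpow_pow_comm two_pos.le]
    gcongr
    exact_mod_cast Nat.pow_log_le_self 2 hN
  have h := abs_sub_dyadicAverage_le hα hx (Nat.log 2 N + 1)
  rw [hlast, sub_zero, ← abs_of_nonneg (a := _ * √(gagliardoEnergy α x)) (by positivity),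
    ← sq_le_sq, mul_pow, mul_pow, Real.sq_sqrt (gagliardoEnergy_nonneg α x)] at h
  refine h.trans ?_
  rw [mul_assoc (_ ^ 2) (2 ^ (α - 2))]
  gcongr
  exact gagliardoEnergy_nonneg α x

end Sobolev

section PowerSums

theorem rpow_sub_one_le_slope {p a : ℝ} (hp : p ≤ 1) (hp₀ : p ≠ 0) (ha : 0 ≤ a)
    (hap : a ≠ 0 ∨ 0 ≤ p) : (a + 1) ^ (p - 1) ≤ (a + 1) ^ p / p - a ^ p / p := by
  have hpos {y : ℝ} (hy : y ∈ Set.Ioo a (a + 1)) : 0 < y := ha.trans_lt hy.1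
  have hcont : ContinuousOn (fun y : ℝ ↦ y ^ p / p) (Set.Icc a (a + 1)) := fun y hy ↦ by
    refine (Real.continuousAt_rpow_const y p
      (hap.imp_left fun h ↦ ?_)).continuousWithinAt.div_const p
    exact ((lt_of_le_of_ne ha h.symm).trans_le hy.1).ne'
  obtain ⟨y, hy, hslope⟩ := exists_hasDerivAt_eq_slope (fun y : ℝ ↦ y ^ p / p)
    (fun y ↦ y ^ (p - 1)) (lt_add_one a) hcont fun y hy ↦ by
      simpa [hp₀] using (Real.hasDerivAt_rpow_const (p := p) (.inl (hpos hy).ne')).div_const p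
  rw [add_sub_cancel_left, div_one] at hslope
  rw [← hslope]
  exact Real.rpow_le_rpow_of_nonpos (hpos hy) hy.2.le (by linarith)

theorem sum_Ico_rpow_sub_one_le {p : ℝ} (hp : p ≤ 1) (hp₀ : p ≠ 0) {m n : ℕ} (hmn : m ≤ n)
    (hmp : m ≠ 0 ∨ 0 ≤ p) :
    ∑ k ∈ Finset.Ico m n, ((k : ℝ) + 1) ^ (p - 1) ≤ (n : ℝ) ^ p / p - (m : ℝ) ^ p / p := by
  rw [← Finset.sum_Ico_sub (fun k : ℕ ↦ (k : ℝ) ^ p / p) hmn]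
  refine Finset.sum_le_sum fun k hk ↦ ?_
  rw [Nat.cast_add_one]
  refine rpow_sub_one_le_slope hp hp₀ k.cast_nonneg (hmp.imp_left fun hm ↦ ?_)
  have := (Finset.mem_Ico.1 hk).1
  exact_mod_cast (show k ≠ 0 by omega)

theorem sum_range_rpow_mul_min_le {α : ℝ} (hα₂ : 2 ≤ α) (hα₃ : α < 3) {N : ℕ} (hN : N ≠ 0) :
    ∑ k ∈ Finset.range N, ((k : ℝ) + 1) ^ (1 - α) * min 1 (((k : ℝ) + 1) / N) ≤
      1 / (3 - α) * (N : ℝ) ^ (2 - α) := by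
  have h := sum_Ico_rpow_sub_one_le (p := 3 - α) (by linarith) (by linarith) N.zero_le
    (.inr (by linarith))
  rw [Nat.cast_zero, Real.zero_rpow (by linarith), zero_div, sub_zero, ← Finset.range_eq_Ico] at h
  calc _ ≤ ∑ k ∈ Finset.range N, ((k : ℝ) + 1) ^ (3 - α - 1) / N := by
        refine Finset.sum_le_sum fun k _ ↦ ?_
        rw [show 3 - α - 1 = 1 - α + 1 by ring, Real.rpow_add_one (by positivity), mul_div_assoc]
        gcongr
        exact min_le_right _ _
    _ ≤ (N : ℝ) ^ (3 - α) / (3 - α) / N := by rw [← Finset.sum_div]; gcongr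
    _ = _ := by
        rw [show 3 - α = 2 - α + 1 by ring, Real.rpow_add_one (by positivity)]
        field_simp

theorem sum_Ico_rpow_mul_min_le {α : ℝ} (hα : 2 < α) {N n : ℕ} (hN : N ≠ 0) (hNn : N ≤ n) :
    ∑ k ∈ Finset.Ico N n, ((k : ℝ) + 1) ^ (1 - α) * min 1 (((k : ℝ) + 1) / N) ≤
      1 / (α - 2) * (N : ℝ) ^ (2 - α) := by
  have : 0 < α - 2 := by linarith
  calc _ ≤ ∑ k ∈ Finset.Ico N n, ((k : ℝ) + 1) ^ (2 - α - 1) := by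
        refine Finset.sum_le_sum fun k _ ↦ ?_
        rw [show 2 - α - 1 = 1 - α by ring]
        exact mul_le_of_le_one_right (by positivity) (min_le_left _ _)
    _ ≤ (n : ℝ) ^ (2 - α) / (2 - α) - (N : ℝ) ^ (2 - α) / (2 - α) :=
        sum_Ico_rpow_sub_one_le (by linarith) (by linarith) hNn (.inl hN)
    _ = 1 / (α - 2) * (N : ℝ) ^ (2 - α) - (n : ℝ) ^ (2 - α) / (α - 2) := by
        rw [← neg_sub α 2, div_neg, div_neg]
        ring
    _ ≤ _ := sub_le_self _ (by positivity)

theorem sum_rpow_mul_min_le {α : ℝ} (hα₂ : 2 < α) (hα₃ : α < 3) {N : ℕ} (hN : N ≠ 0) (n : ℕ) :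
    ∑ k ∈ Finset.range n, ((k : ℝ) + 1) ^ (1 - α) * min 1 (((k : ℝ) + 1) / N) ≤
      (1 / (3 - α) + 1 / (α - 2)) * (N : ℝ) ^ (2 - α) := by
  have hmax := le_max_left N n
  calc _ ≤ ∑ k ∈ Finset.range (max N n), ((k : ℝ) + 1) ^ (1 - α) * min 1 (((k : ℝ) + 1) / N) :=
        Finset.sum_le_sum_of_subset_of_nonneg (Finset.range_mono (le_max_right N n))
          fun k _ _ ↦ by positivity
    _ ≤ _ := by
        rw [← Finset.sum_range_add_sum_Ico _ hmax, add_mul]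
        exact add_le_add (sum_range_rpow_mul_min_le hα₂.le hα₃ hN)
          (sum_Ico_rpow_mul_min_le hα₂ hN hmax)

end PowerSums

section BoxEnergy

/-- The indicator function of `{-a, …, a}`. -/
noncomputable def boxIndicator (a : ℕ) (k : ℤ) : ℝ :=
  if |k| ≤ a then 1 else 0

theorem sq_boxIndicator_sub (a : ℕ) (i j : ℤ) : (boxIndicator a i - boxIndicator a j) ^ 2 =
    if min |i| |j| ≤ a ∧ (a : ℤ) < max |i| |j| then 1 else 0 := by
  simp only [boxIndicator, min_le_iff, lt_max_iff]
  split_ifs <;> first | omega | norm_num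

theorem summable_and_tsum_sq_boxIndicator_sub_shift_le (a : ℕ) (r : ℤ) :
    (Summable fun i ↦ (boxIndicator a i - boxIndicator a (i - r)) ^ 2) ∧
      ∑' i, (boxIndicator a i - boxIndicator a (i - r)) ^ 2 ≤ 2 * |(r : ℝ)| := by
  let crossing : Finset ℤ := Finset.Ico (-a + min r 0) (-a + max r 0) ∪
    Finset.Ioc (a + min r 0) (a + max r 0)
  have hsum := hasSum_sum_of_ne_finset_zero (L := .unconditional ℤ) (s := crossing)
    (f := fun i ↦ (boxIndicator a i - boxIndicator a (i - r)) ^ 2) fun i hi ↦ by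
      rw [sq_boxIndicator_sub, if_neg]
      simp only [crossing, Finset.mem_union, Finset.mem_Ico, Finset.mem_Ioc] at hi
      grind
  have hcard : (crossing.card : ℤ) ≤ 2 * |r| := by
    have h := Finset.card_union_le (Finset.Ico (-a + min r 0) (-a + max r 0))
      (Finset.Ioc (a + min r 0) (a + max r 0))
    rw [Int.card_Ico, Int.card_Ioc] at h
    grind
  refine ⟨hsum.summable, hsum.tsum_eq.trans_le ?_⟩
  calc _ ≤ ∑ _i ∈ crossing, (1 : ℝ) := by
        refine Finset.sum_le_sum fun i _ ↦ ?_
        rw [sq_boxIndicator_sub]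
        split_ifs <;> norm_num
    _ ≤ 2 * |(r : ℝ)| := by
        rw [Finset.sum_const, nsmul_one]
        exact_mod_cast hcard

theorem summable_and_tsum_mul_sq_boxIndicator_sub_le {w : ℤ → ℝ} (hw : ∀ r, 0 ≤ w r)
    (hsum : Summable fun r : ℤ ↦ |(r : ℝ)| * w r) (a : ℕ) :
    (Summable fun p : ℤ × ℤ ↦ w (p.1 - p.2) * (boxIndicator a p.1 - boxIndicator a p.2) ^ 2) ∧
      ∑' p : ℤ × ℤ, w (p.1 - p.2) * (boxIndicator a p.1 - boxIndicator a p.2) ^ 2 ≤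
        2 * ∑' r : ℤ, |(r : ℝ)| * w r := by
  let e : ℤ × ℤ ≃ ℤ × ℤ :=
    (Equiv.prodComm ℤ ℤ).trans (Equiv.prodShear (Equiv.refl ℤ) Equiv.subLeft)
  set F : ℤ × ℤ → ℝ := fun p ↦ w (p.1 - p.2) * (boxIndicator a p.1 - boxIndicator a p.2) ^ 2
  have hFe (r i : ℤ) : F (e (r, i)) = w r * (boxIndicator a i - boxIndicator a (i - r)) ^ 2 := by
    simp [F, e]
  have hinner (r : ℤ) : Summable fun i ↦ F (e (r, i)) := by
    simp only [hFe]
    exact (summable_and_tsum_sq_boxIndicator_sub_shift_le a r).1.mul_left (w r)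
  have hle (r : ℤ) : ∑' i, F (e (r, i)) ≤ 2 * (|(r : ℝ)| * w r) := by
    simp only [hFe, tsum_mul_left]
    refine (mul_le_mul_of_nonneg_left
      (summable_and_tsum_sq_boxIndicator_sub_shift_le a r).2 (hw r)).trans_eq ?_
    ring
  have hF (p : ℤ × ℤ) : 0 ≤ F p := mul_nonneg (hw _) (sq_nonneg _)
  have houter : Summable fun r ↦ ∑' i, F (e (r, i)) :=
    (hsum.mul_left 2).of_nonneg_of_le (fun r ↦ tsum_nonneg fun i ↦ hF _) hle
  have hprod : Summable (F ∘ e) := (summable_prod_of_nonneg fun p ↦ hF _).2 ⟨hinner, houter⟩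
  refine ⟨e.summable_iff.1 hprod, ?_⟩
  rw [← e.tsum_eq, ← tsum_mul_left]
  exact (hprod.tsum_prod' hinner).trans_le (houter.tsum_le_tsum hle (hsum.mul_left 2))

theorem energyDensity_sum_boxIndicator_le {α κ : ℝ} {ι : Type*} [Fintype ι] (a : ι → ℕ)
    {p : ℤ × ℤ} (hκ : ∑ s, (boxIndicator (a s) p.1 - boxIndicator (a s) p.2) ^ 2 ≤ κ)
    (c : ι → ℝ) :
    energyDensity α (fun k ↦ ∑ s, c s * boxIndicator (a s) k) p ≤
      ∑ s, c s ^ 2 * (κ / |((p.1 - p.2 : ℤ) : ℝ)| ^ α *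
        (boxIndicator (a s) p.1 - boxIndicator (a s) p.2) ^ 2) := by
  have hcauchy := Finset.sum_sq_le_sum_mul_sum_of_sq_le_mul Finset.univ
    (r := fun s ↦ c s * (boxIndicator (a s) p.1 - boxIndicator (a s) p.2))
    (f := fun s ↦ (boxIndicator (a s) p.1 - boxIndicator (a s) p.2) ^ 2)
    (g := fun s ↦ c s ^ 2 * (boxIndicator (a s) p.1 - boxIndicator (a s) p.2) ^ 2)
    (fun s _ ↦ sq_nonneg _) (fun s _ ↦ by positivity) fun s _ ↦ by
      rw [mul_pow, sq_boxIndicator_sub]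
      split_ifs <;> simp
  have hle := hcauchy.trans (mul_le_mul_of_nonneg_right hκ
    (Finset.sum_nonneg fun s _ ↦ by positivity))
  rw [energyDensity, ← Finset.sum_sub_distrib]
  simp only [← mul_sub, mul_left_comm (c _ ^ 2), ← Finset.mul_sum]
  rw [div_mul_eq_mul_div]
  gcongr

theorem gagliardoEnergy_sum_boxIndicator_le {α : ℝ} {ι : Type*} [Fintype ι] (a : ι → ℕ)
    {κ : ℤ → ℝ} (hκ : ∀ i j, ∑ s, (boxIndicator (a s) i - boxIndicator (a s) j) ^ 2 ≤ κ (i - j))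
    (hsum : Summable fun r : ℤ ↦ |(r : ℝ)| * (κ r / |(r : ℝ)| ^ α)) (c : ι → ℝ) :
    gagliardoEnergy α (fun k ↦ ∑ s, c s * boxIndicator (a s) k) ≤
      2 * (∑' r : ℤ, |(r : ℝ)| * (κ r / |(r : ℝ)| ^ α)) * ∑ s, c s ^ 2 := by
  have hw (r : ℤ) : 0 ≤ κ r / |(r : ℝ)| ^ α := by
    have : 0 ≤ κ r := by simpa using (Finset.sum_nonneg fun s _ ↦ sq_nonneg _).trans (hκ r 0)
    positivity
  have hbox (s : ι) := summable_and_tsum_mul_sq_boxIndicator_sub_le hw hsum (a s)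
  have hdensity (p : ℤ × ℤ) :=
    energyDensity_sum_boxIndicator_le (α := α) a (hκ p.1 p.2) c
  have hmajorant := summable_sum fun s (_ : s ∈ Finset.univ) ↦ (hbox s).1.mul_left (c s ^ 2)
  calc _ ≤ _ := Summable.tsum_le_tsum hdensity
        (hmajorant.of_nonneg_of_le (energyDensity_nonneg α _) hdensity) hmajorant
    _ = ∑ s, c s ^ 2 * ∑' p : ℤ × ℤ, κ (p.1 - p.2) / |((p.1 - p.2 : ℤ) : ℝ)| ^ α *
          (boxIndicator (a s) p.1 - boxIndicator (a s) p.2) ^ 2 := by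
        rw [Summable.tsum_finsetSum fun s _ ↦ (hbox s).1.mul_left (c s ^ 2)]
        simp only [tsum_mul_left]
    _ ≤ ∑ s, c s ^ 2 * (2 * ∑' r : ℤ, |(r : ℝ)| * (κ r / |(r : ℝ)| ^ α)) := by
        gcongr with s
        exact (hbox s).2
    _ = _ := by rw [← Finset.sum_mul, mul_comm]

end BoxEnergy

section Separation

theorem card_filter_mul_mem_Ico_le {l : ℕ} (hl : l ≠ 0) (m : ℕ) {A B : ℤ} (hAB : A ≤ B) :
    ((Finset.univ.filter fun j : Fin m ↦
      A ≤ (((j + 1) * l : ℕ) : ℤ) ∧ (((j + 1) * l : ℕ) : ℤ) < B).card : ℝ) ≤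
      ((B - A : ℤ) : ℝ) / l + 1 := by
  have hl₀ : (0 : ℤ) < l := by positivity
  have hinj := Finset.card_le_card_of_injOn
    (s := Finset.univ.filter fun j : Fin m ↦
      A ≤ (((j + 1) * l : ℕ) : ℤ) ∧ (((j + 1) * l : ℕ) : ℤ) < B)
    (t := (Finset.Ico A B).filter fun x ↦ (l : ℤ) ∣ x)
    (fun j ↦ (((j + 1) * l : ℕ) : ℤ)) (fun j hj ↦ by simpa using hj) fun i _ j _ hij ↦ by
      simpa [hl, Fin.ext_iff] using hij
  have hcount := Int.Ico_filter_dvd_card A B hl₀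
  have hceil : ((⌈(B / (l : ℤ) : ℚ)⌉ - ⌈(A / (l : ℤ) : ℚ)⌉ : ℤ) : ℚ) ≤ (B - A) / l + 1 := by
    have hB := Int.ceil_lt_add_one (B / (l : ℤ) : ℚ)
    have hA := Int.le_ceil (A / (l : ℤ) : ℚ)
    push_cast at hA hB ⊢
    rw [sub_div]
    linarith
  have hAB' : (0 : ℚ) ≤ (B - A) / l + 1 := by
    have : (A : ℚ) ≤ B := by exact_mod_cast hAB
    have : (0 : ℚ) ≤ B - A := by linarith
    positivity
  have hfilter : (((Finset.Ico A B).filter fun x ↦ (l : ℤ) ∣ x).card : ℚ) ≤ (B - A) / l + 1 := by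
    rw [← Int.cast_natCast, hcount, Int.cast_max, Int.cast_zero]
    exact max_le hceil hAB'
  have hQ : ((Finset.univ.filter fun j : Fin m ↦
      A ≤ (((j + 1) * l : ℕ) : ℤ) ∧ (((j + 1) * l : ℕ) : ℤ) < B).card : ℚ) ≤ (B - A) / l + 1 :=
    (by exact_mod_cast hinj : _ ≤ _).trans hfilter
  exact_mod_cast hQ

theorem sum_sq_boxIndicator_sub_le {l : ℕ} (hl : l ≠ 0) (m : ℕ) (i j : ℤ) :
    ∑ s : Fin m, (boxIndicator ((s + 1) * l) i - boxIndicator ((s + 1) * l) j) ^ 2 ≤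
      1 + min (m : ℝ) (|((i - j : ℤ) : ℝ)| / l) := by
  simp only [sq_boxIndicator_sub, Finset.sum_boole]
  rw [← min_add_add_left]
  refine le_min ?_ ?_
  · refine le_add_of_nonneg_of_le zero_le_one (Nat.cast_le.2 ?_)
    exact (Finset.card_filter_le _ _).trans_eq (Finset.card_fin m)
  · refine (card_filter_mul_mem_Ico_le hl m min_le_max).trans ?_
    rw [add_comm]
    gcongr
    rw [max_sub_min_eq_abs', ← Int.cast_abs]
    exact_mod_cast abs_abs_sub_abs_le i j

end Separation

section BoxScales

variable {α : ℝ}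

/-- An upper bound for the number of boxes separating two sites at distance `|r|`, when the spacing
of the radii is at least `N ^ (3 - α)` and their number at most `N ^ (α - 2)`. -/
noncomputable def crossingBound (α : ℝ) (N : ℕ) (r : ℤ) : ℝ :=
  1 + (N : ℝ) ^ (α - 2) * min 1 (|(r : ℝ)| / N)

theorem abs_mul_crossingBound_div_natCast_add_one (N k : ℕ) :
    |((k + 1 : ℕ) : ℝ)| * (crossingBound α N (k + 1 : ℕ) / |((k + 1 : ℕ) : ℝ)| ^ α) =
      ((k : ℝ) + 1) ^ (1 - α) + (N : ℝ) ^ (α - 2) *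
        (((k : ℝ) + 1) ^ (1 - α) * min 1 (((k : ℝ) + 1) / N)) := by
  have hk : (0 : ℝ) < k + 1 := by positivity
  rw [crossingBound, Int.cast_natCast, Nat.cast_add_one, abs_of_pos hk, Real.rpow_sub hk,
    Real.rpow_one]
  ring

theorem sum_abs_mul_crossingBound_div_le (hα₂ : 2 < α) (hα₃ : α < 3) {N : ℕ} (hN : N ≠ 0) (n : ℕ) :
    ∑ k ∈ Finset.range n,
        |((k + 1 : ℕ) : ℝ)| * (crossingBound α N (k + 1 : ℕ) / |((k + 1 : ℕ) : ℝ)| ^ α) ≤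
      ∑' k : ℕ, ((k : ℝ) + 1) ^ (1 - α) + (1 / (3 - α) + 1 / (α - 2)) := by
  have hsum : Summable fun k : ℕ ↦ ((k : ℝ) + 1) ^ (1 - α) := by
    simpa using (summable_nat_add_iff 1).2 (Real.summable_nat_rpow.2 (show 1 - α < -1 by linarith))
  simp only [abs_mul_crossingBound_div_natCast_add_one, Finset.sum_add_distrib, ← Finset.mul_sum]
  refine add_le_add (hsum.sum_le_tsum _ fun k _ ↦ by positivity) ?_
  calc _ ≤ (N : ℝ) ^ (α - 2) * ((1 / (3 - α) + 1 / (α - 2)) * (N : ℝ) ^ (2 - α)) := by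
        gcongr
        exact sum_rpow_mul_min_le hα₂ hα₃ hN n
    _ = _ := by
        rw [mul_left_comm, ← Real.rpow_add (by positivity), sub_add_sub_cancel, sub_self,
          Real.rpow_zero, mul_one]

theorem exists_forall_tsum_abs_mul_crossingBound_div_le (hα₂ : 2 < α) (hα₃ : α < 3) :
    ∃ M : ℝ, 0 ≤ M ∧ ∀ N : ℕ, N ≠ 0 →
      (Summable fun r : ℤ ↦ |(r : ℝ)| * (crossingBound α N r / |(r : ℝ)| ^ α)) ∧
        ∑' r : ℤ, |(r : ℝ)| * (crossingBound α N r / |(r : ℝ)| ^ α) ≤ M := by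
  have : 0 ≤ α - 2 := by linarith
  have : 0 ≤ 3 - α := by linarith
  refine ⟨2 * (∑' k : ℕ, ((k : ℝ) + 1) ^ (1 - α) + (1 / (3 - α) + 1 / (α - 2))),
    by positivity, fun N hN ↦ ?_⟩
  set f : ℤ → ℝ := fun r ↦ |(r : ℝ)| * (crossingBound α N r / |(r : ℝ)| ^ α)
  have hf_zero : f 0 = 0 := by simp [f]
  have hf_neg (r : ℤ) : f (-r) = f r := by simp [f, crossingBound]
  have hf_nonneg (r : ℤ) : 0 ≤ f r := by simp only [f, crossingBound]; positivity
  have hpartial := sum_abs_mul_crossingBound_div_le hα₂ hα₃ hN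
  have hsucc : Summable fun k : ℕ ↦ f (k + 1 : ℕ) :=
    summable_of_sum_range_le (fun k ↦ hf_nonneg _) hpartial
  have hnat : Summable fun k : ℕ ↦ f k := (summable_nat_add_iff 1).1 hsucc
  have hint := HasSum.of_nat_of_neg hnat.hasSum (hnat.hasSum.congr_fun fun k ↦ hf_neg k)
  refine ⟨hint.summable, ?_⟩
  rw [hint.tsum_eq, hf_zero, sub_zero, ← two_mul, hnat.tsum_eq_zero_add, Nat.cast_zero, hf_zero,
    zero_add]
  gcongr
  exact hsucc.tsum_le_of_sum_range_le hpartial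

theorem one_add_min_le_crossingBound {N l m : ℕ} (hl : (N : ℝ) ^ (3 - α) ≤ l) (hN : N ≠ 0)
    (hm : m * l ≤ N) (r : ℤ) :
    1 + min (m : ℝ) (|(r : ℝ)| / l) ≤ crossingBound α N r := by
  have hN₀ : (0 : ℝ) < N := by positivity
  have hpow : (N : ℝ) ^ (α - 2) * (N : ℝ) ^ (3 - α) = N := by
    rw [← Real.rpow_add hN₀]
    norm_num
  have hl₀ : (0 : ℝ) < l := lt_of_lt_of_le (by positivity) hl
  have hN_le : (N : ℝ) ≤ (N : ℝ) ^ (α - 2) * l := hpow.symm.trans_le (by gcongr)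
  have hm' : (m : ℝ) * l ≤ N := by exact_mod_cast hm
  rw [crossingBound, mul_min_of_nonneg _ _ (by positivity), mul_one]
  gcongr
  · exact le_of_mul_le_mul_right (hm'.trans hN_le) hl₀
  · rw [div_le_iff₀ hl₀, mul_div_assoc', div_mul_eq_mul_div, le_div_iff₀ hN₀]
    calc _ ≤ |(r : ℝ)| * ((N : ℝ) ^ (α - 2) * l) := by gcongr
      _ = _ := by ring

theorem exists_spacing_and_count (hα₂ : 2 < α) (hα₃ : α < 3) {N : ℕ} (hN : N ≠ 0) :
    ∃ l m : ℕ, (N : ℝ) ^ (3 - α) ≤ l ∧ m * l ≤ N ∧ (N : ℝ) ^ (α - 2) ≤ 4 * m := by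
  have hN₁ : (1 : ℝ) ≤ N := by exact_mod_cast Nat.one_le_iff_ne_zero.2 hN
  have hN₀ : (0 : ℝ) < N := by positivity
  set l := ⌈(N : ℝ) ^ (3 - α)⌉₊
  have hceil : (N : ℝ) ^ (3 - α) ≤ l := Nat.le_ceil _
  have hl₀ : 0 < l := Nat.ceil_pos.2 (by positivity)
  have hlN : l ≤ N := Nat.ceil_le.2
    ((Real.rpow_le_rpow_of_exponent_le hN₁ (by linarith)).trans_eq (Real.rpow_one _))
  have hl_le : (l : ℝ) ≤ 2 * (N : ℝ) ^ (3 - α) := by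
    linarith [Nat.ceil_lt_add_one (Real.rpow_nonneg hN₀.le (3 - α)),
      Real.one_le_rpow hN₁ (show 0 ≤ 3 - α by linarith)]
  refine ⟨l, N / l, hceil, Nat.div_mul_le_self N l, ?_⟩
  have hN_le : (N : ℝ) ≤ 2 * (N / l : ℕ) * l := by
    have hdiv := Nat.lt_div_mul_add (a := N) hl₀
    have hone := Nat.mul_le_mul_right l (Nat.div_pos hlN hl₀)
    exact_mod_cast (show N ≤ 2 * (N / l) * l by rw [mul_assoc]; omega)
  refine le_of_mul_le_mul_right (a := (N : ℝ) ^ (3 - α)) ?_ (by positivity)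
  calc (N : ℝ) ^ (α - 2) * (N : ℝ) ^ (3 - α) = N := by
        rw [← Real.rpow_add hN₀]
        norm_num
    _ ≤ 2 * (N / l : ℕ) * (2 * (N : ℝ) ^ (3 - α)) := hN_le.trans (by gcongr)
    _ = _ := by ring

/-- The configuration of height one on `{-a, …, a}`. -/
def boxConfig {N : ℕ} (a : ℕ) (ha : a ≤ N) : ChainConfig N :=
  ⟨fun k ↦ if |k| ≤ a then 1 else 0, fun k hk ↦ if_neg (by omega)⟩

theorem heightAt_linearCombination_boxConfig {N : ℕ} {ι : Type*} [Fintype ι] {a : ι → ℕ}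
    (ha : ∀ s, a s ≤ N) (n : ι → ℤ) (k : ℤ) :
    heightAt k (Fintype.linearCombination ℤ (fun s ↦ boxConfig (a s) (ha s)) n) =
      ∑ s, (n s : ℝ) * boxIndicator (a s) k := by
  rw [Fintype.linearCombination_apply, map_sum]
  refine Finset.sum_congr rfl fun s _ ↦ ?_
  rw [map_smul, heightAt_apply, zsmul_eq_mul, boxConfig, boxIndicator, Int.cast_ite, Int.cast_one,
    Int.cast_zero]

end BoxScales

section VarianceBounds

variable {α β : ℝ}

theorem exists_sq_heightAt_zero_le (hβ : 0 < β) (hα : 2 < α) :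
    ∃ K : ℝ, 0 < K ∧ ∀ N : ℕ, N ≠ 0 → ∀ φ : ChainConfig N,
      heightAt 0 φ ^ 2 ≤ K * (N : ℝ) ^ (α - 2) * chainForm N β (one_lt_two.trans hα) φ := by
  obtain ⟨K, hK, hsobolev⟩ := exists_sq_le_mul_rpow_mul_gagliardoEnergy hα
  refine ⟨K / β, by positivity, fun N hN φ ↦ ?_⟩
  rw [chainForm_apply]
  calc _ ≤ K * (N : ℝ) ^ (α - 2) * gagliardoEnergy α (heightProfile φ) :=
        hsobolev N _ hN (summable_energyDensity_heightProfile (one_lt_two.trans hα) φ)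
          fun k hk ↦ heightProfile_eq_zero φ hk
    _ = _ := by field_simp

theorem exists_forall_chainVar_le (hβ : 0 < β) (hα : 2 < α) :
    ∃ C : ℝ, ∀ N : ℕ, N ≠ 0 → chainVar N β α 2 ≤ C * (N : ℝ) ^ (α - 2) := by
  obtain ⟨K, hK, hheight⟩ := exists_sq_heightAt_zero_le hβ hα
  refine ⟨2 * K, fun N hN ↦ ?_⟩
  have hQ := isConfining_chainForm (N := N) hβ (one_lt_two.trans hα)
  rw [chainVar_two (one_lt_two.trans hα), div_le_iff₀ hQ.laplaceSum_zero_pos, mul_assoc 2]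
  exact secondMoment_le_of_sq_le hQ (by positivity) (hheight N hN)

theorem exists_forall_gagliardoEnergy_sum_boxIndicator_le (hα₂ : 2 < α) (hα₃ : α < 3) :
    ∃ M : ℝ, 0 ≤ M ∧ ∀ N l m : ℕ, N ≠ 0 → (N : ℝ) ^ (3 - α) ≤ l → m * l ≤ N → ∀ c : Fin m → ℝ,
      gagliardoEnergy α (fun k ↦ ∑ s, c s * boxIndicator ((s + 1) * l) k) ≤ M * ∑ s, c s ^ 2 := by
  obtain ⟨M, hM, hbound⟩ := exists_forall_tsum_abs_mul_crossingBound_div_le hα₂ hα₃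
  refine ⟨2 * M, by positivity, fun N l m hN hl hm c ↦ ?_⟩
  have hl₀ : l ≠ 0 := by
    rintro rfl
    exact absurd hl (by simpa using Real.rpow_pos_of_pos (by positivity) _)
  refine (gagliardoEnergy_sum_boxIndicator_le (fun s : Fin m ↦ (s + 1) * l) (fun i j ↦ ?_)
    (hbound N hN).1 c).trans ?_
  · exact (sum_sq_boxIndicator_sub_le hl₀ m i j).trans (one_add_min_le_crossingBound hl hN hm _)
  · gcongr
    exact (hbound N hN).2

theorem card_mul_intVariance_le_chainVar (hβ : 0 < β) (hα : 2 < α) {N : ℕ} (hN : N ≠ 0)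
    {ι : Type*} [Fintype ι] {a : ι → ℕ} (ha : ∀ s, a s ≤ N) {M : ℝ} (hM : 0 ≤ M)
    (hbox : ∀ c : ι → ℝ,
      gagliardoEnergy α (fun k ↦ ∑ s, c s * boxIndicator (a s) k) ≤ M * ∑ s, c s ^ 2) :
    Fintype.card ι * intVariance (β * M + 1) ≤ chainVar N β α 2 := by
  obtain ⟨K, hK, hheight⟩ := exists_sq_heightAt_zero_le hβ hα
  let T := Fintype.linearCombination ℤ fun s ↦ boxConfig (a s) (ha s)
  have hheightT (n : ι → ℤ) (k : ℤ) : heightAt k (T n) = ∑ s, (n s : ℝ) * boxIndicator (a s) k :=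
    heightAt_linearCombination_boxConfig ha n k
  have hℓT (n : ι → ℤ) : heightAt 0 (T n) = ∑ s, (n s : ℝ) := by
    simp [hheightT, boxIndicator]
  have hQT (n : ι → ℤ) : chainForm N β (one_lt_two.trans hα) (T n) + ∑ s, (n s : ℝ) ^ 2 ≤
      (β * M + 1) * ∑ s, (n s : ℝ) ^ 2 := by
    have hprofile : heightProfile (T n) = fun k ↦ ∑ s, (n s : ℝ) * boxIndicator (a s) k :=
      funext (hheightT n)
    rw [chainForm_apply, hprofile, add_mul, one_mul, mul_assoc]
    gcongr
    exact hbox _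
  have hQ := isConfining_chainForm (N := N) hβ (one_lt_two.trans hα)
  rw [chainVar_two (one_lt_two.trans hα), le_div_iff₀ hQ.laplaceSum_zero_pos]
  exact card_mul_intVariance_mul_le_secondMoment hQ (by positivity) (hheight N hN)
    (by positivity) T hℓT hQT

theorem exists_forall_le_chainVar (hβ : 0 < β) (hα₂ : 2 < α) (hα₃ : α < 3) :
    ∃ c : ℝ, 0 < c ∧ ∀ N : ℕ, N ≠ 0 → c * (N : ℝ) ^ (α - 2) ≤ chainVar N β α 2 := by
  obtain ⟨M, hM, hbox⟩ := exists_forall_gagliardoEnergy_sum_boxIndicator_le hα₂ hα₃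
  have hv : 0 < intVariance (β * M + 1) := intVariance_pos (by positivity)
  refine ⟨intVariance (β * M + 1) / 4, by positivity, fun N hN ↦ ?_⟩
  obtain ⟨l, m, hl, hml, hm⟩ := exists_spacing_and_count hα₂ hα₃ hN
  calc _ ≤ intVariance (β * M + 1) / 4 * (4 * m) := by gcongr
    _ = Fintype.card (Fin m) * intVariance (β * M + 1) := by rw [Fintype.card_fin]; ring
    _ ≤ _ := card_mul_intVariance_le_chainVar hβ hα₂ hN
        (fun s ↦ (Nat.mul_le_mul_right l s.isLt).trans hml) hM (hbox N l m hN hl hml)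

end VarianceBounds

/-- **Polynomial delocalisation of the discrete Gaussian long-range chain for `α ∈ (2,3)`.**
For every `β ∈ (0,∞)` and every `α ∈ (2,3)` there exist constants `c_β > 0` and `C_β < ∞`
such that for every `N ≥ 1`, `c_β N^{α−2} ≤ Var_{N,β,α}[φ(0)] ≤ C_β N^{α−2}`. -/
theorem gaussian_chain_poly_deloc_alpha_two_three
    (β : ℝ) (hβ : 0 < β) (α : ℝ) (hα₁ : 2 < α) (hα₂ : α < 3) :
    ∃ c C : ℝ, 0 < c ∧
      ∀ N : ℕ, 1 ≤ N →
        c * (N : ℝ) ^ (α - 2) ≤ chainVar N β α 2 ∧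
          chainVar N β α 2 ≤ C * (N : ℝ) ^ (α - 2) := by
  obtain ⟨c, hc, hlower⟩ := exists_forall_le_chainVar hβ hα₁ hα₂
  obtain ⟨C, hupper⟩ := exists_forall_chainVar_le hβ hα₁
  exact ⟨c, C, hc, fun N hN ↦
    ⟨hlower N (Nat.one_le_iff_ne_zero.1 hN), hupper N (Nat.one_le_iff_ne_zero.1 hN)⟩⟩
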